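/- arXiv:1412.1429 — 4 statements merged into one kernel-verified Lean document; each statement's English description precedes it below -/
import Mathlib

section
/- Let μ ⪯ ν be probability measures on ℝ in convex order with supp(μ) ⊆ [0,∞), and let Γ ⊆ ℝ² be a minimising monotonicity set for the pair of cost functions c(x,y) := |x+y| and c'(x,y) := |x+y|y². Suppose (x,y⁺), (x,y⁻), (x',y') ∈ Γ with −x' < −x ≤ y⁻ < y⁺. Then it cannot be that y⁻ < y' < y⁺. -/
/-!
Move the conditional measure `ρ` from the fibre over `x` to the fibre over `x'`, and `σ` from the
fibre over `x'` to the fibre over `x`. If `ρ` and `σ` have the same mass and the same mean, this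
produces a competitor, and a cost `c` changes only through its increment `y ↦ c x' y - c x y`.
Taking `ρ` supported on `{y⁻, y⁺}` with mean `y'` and `σ` the unit mass at `y'` compares the chord
of the increment with its value at `y'`. For `|x + y|` the increment is the constant `x' - x` on
`[-x, ∞)`, so the first-order costs tie; for `|x + y| y²` it is the strictly convex `(x' - x) y²`,
so the exchange strictly increases the secondary cost.
-/

open MeasureTheory

noncomputable section

/-- `μ` and `ν` are in convex order. -/
def InConvexOrder (μ ν : Measure ℝ) : Prop :=
  ∀ φ : ℝ → ℝ, ConvexOn ℝ Set.univ φ → Integrable φ μ → Integrable φ ν →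
    ∫ x, φ x ∂μ ≤ ∫ x, φ x ∂ν

/-- `α` has finite support contained in `Γ`. -/
def HasFiniteSupportIn (α : Measure (ℝ × ℝ)) (Γ : Set (ℝ × ℝ)) : Prop :=
  ∃ S : Finset (ℝ × ℝ), ↑S ⊆ Γ ∧ α ((↑S : Set (ℝ × ℝ))ᶜ) = 0

/-- `α'` is a competitor of `α`: a finitely supported measure with the same
marginals whose fiberwise barycenters agree with those of `α`. -/
def IsCompetitor (α α' : Measure (ℝ × ℝ)) : Prop :=
  (∃ S : Finset (ℝ × ℝ), α' ((↑S : Set (ℝ × ℝ))ᶜ) = 0) ∧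
  α'.map Prod.fst = α.map Prod.fst ∧
  α'.map Prod.snd = α.map Prod.snd ∧
  ∀ x : ℝ, ∫ p in {p : ℝ × ℝ | p.1 = x}, p.2 ∂α' =
    ∫ p in {p : ℝ × ℝ | p.1 = x}, p.2 ∂α

/-- `Γ` is a minimising monotonicity set for `(c, c')`: for every finitely
supported measure `α` with support in `Γ` and every competitor `α'` of `α`,
`∫ c dα ≤ ∫ c dα'`, and `∫ c dα = ∫ c dα'` implies `∫ c' dα ≥ ∫ c' dα'`. -/
def IsMinMonotonicitySet (c c' : ℝ → ℝ → ℝ) (Γ : Set (ℝ × ℝ)) : Prop :=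
  ∀ α : Measure (ℝ × ℝ), IsFiniteMeasure α → HasFiniteSupportIn α Γ →
    ∀ α' : Measure (ℝ × ℝ), IsCompetitor α α' →
      (∫ p : ℝ × ℝ, c p.1 p.2 ∂α ≤ ∫ p : ℝ × ℝ, c p.1 p.2 ∂α') ∧
      (∫ p : ℝ × ℝ, c p.1 p.2 ∂α = ∫ p : ℝ × ℝ, c p.1 p.2 ∂α' →
        ∫ p : ℝ × ℝ, c' p.1 p.2 ∂α' ≤ ∫ p : ℝ × ℝ, c' p.1 p.2 ∂α)

/-- `Γ` is a maximising monotonicity set for `(c, c')`: for every finitely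
supported measure `α` with support in `Γ` and every competitor `α'` of `α`,
`∫ c dα ≥ ∫ c dα'`, and `∫ c dα = ∫ c dα'` implies `∫ c' dα ≤ ∫ c' dα'`. -/
def IsMaxMonotonicitySet (c c' : ℝ → ℝ → ℝ) (Γ : Set (ℝ × ℝ)) : Prop :=
  ∀ α : Measure (ℝ × ℝ), IsFiniteMeasure α → HasFiniteSupportIn α Γ →
    ∀ α' : Measure (ℝ × ℝ), IsCompetitor α α' →
      (∫ p : ℝ × ℝ, c p.1 p.2 ∂α' ≤ ∫ p : ℝ × ℝ, c p.1 p.2 ∂α) ∧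
      (∫ p : ℝ × ℝ, c p.1 p.2 ∂α = ∫ p : ℝ × ℝ, c p.1 p.2 ∂α' →
        ∫ p : ℝ × ℝ, c' p.1 p.2 ∂α ≤ ∫ p : ℝ × ℝ, c' p.1 p.2 ∂α')

section FiniteSupport

variable {E F : Type*} [MeasurableSpace E] [MeasurableSingletonClass E] [NormedAddCommGroup F]

theorem integrable_of_ae_mem_finset {ρ : Measure E} [IsFiniteMeasure ρ] {S : Finset E}
    (hS : ∀ᵐ y ∂ρ, y ∈ S) (f : E → F) : Integrable f ρ := by
  have hf : IntegrableOn f S ρ := IntegrableOn.finset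
  rwa [IntegrableOn, Measure.restrict_eq_self_of_ae_mem hS] at hf

theorem ae_mem_pair_smul_dirac_add_smul_dirac [DecidableEq E] (a b : NNReal) (y₁ y₂ : E) :
    ∀ᵐ y ∂(a • Measure.dirac y₁ + b • Measure.dirac y₂), y ∈ ({y₁, y₂} : Finset E) := by
  rw [ae_add_measure_iff]
  constructor <;> refine Measure.ae_smul_measure ?_ _ <;> simp [ae_dirac_eq]

theorem integral_smul_dirac_add_smul_dirac [NormedSpace ℝ F] [CompleteSpace F] (a b : NNReal)
    (y₁ y₂ : E) (f : E → F) :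
    ∫ y, f y ∂(a • Measure.dirac y₁ + b • Measure.dirac y₂) = a • f y₁ + b • f y₂ := by
  have hf (t : NNReal) (y : E) : Integrable f (t • Measure.dirac y) :=
    (integrable_dirac (by simp)).smul_measure_nnreal
  simp only [integral_add_measure (hf a y₁) (hf b y₂), integral_smul_nnreal_measure, integral_dirac]

end FiniteSupport

/-- The measure on `ℝ²` carrying `ρ` on the fibre over `x` and `σ` on the fibre over `x'`.
Exchanging `x` and `x'` yields the competitors; for `x = x'` the two measures add up. -/
def twoFiberMeasure (x x' : ℝ) (ρ σ : Measure ℝ) : Measure (ℝ × ℝ) :=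
  ρ.map (Prod.mk x) + σ.map (Prod.mk x')

section TwoFiber

variable {x x' : ℝ} {ρ σ : Measure ℝ} {S T : Finset ℝ}

instance [IsFiniteMeasure ρ] [IsFiniteMeasure σ] : IsFiniteMeasure (twoFiberMeasure x x' ρ σ) := by
  unfold twoFiberMeasure
  infer_instance

theorem hasFiniteSupportIn_twoFiberMeasure {Γ : Set (ℝ × ℝ)}
    (hS : ∀ᵐ y ∂ρ, y ∈ S) (hT : ∀ᵐ y ∂σ, y ∈ T)
    (hSΓ : ∀ y ∈ S, (x, y) ∈ Γ) (hTΓ : ∀ y ∈ T, (x', y) ∈ Γ) :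
    HasFiniteSupportIn (twoFiberMeasure x x' ρ σ) Γ := by
  classical
  refine ⟨S.image (Prod.mk x) ∪ T.image (Prod.mk x'), ?_, ?_⟩
  · simpa [Set.subset_def, or_imp, forall_and] using ⟨hSΓ, hTΓ⟩
  · suffices ∀ᵐ p ∂twoFiberMeasure x x' ρ σ,
        p ∈ S.image (Prod.mk x) ∪ T.image (Prod.mk x') from this
    rw [twoFiberMeasure, ae_add_measure_iff, (measurableEmbedding_prodMk_left x).ae_map_iff,
      (measurableEmbedding_prodMk_left x').ae_map_iff]
    exact ⟨hS.mono fun y hy => Finset.mem_union_left _ (Finset.mem_image_of_mem _ hy),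
      hT.mono fun y hy => Finset.mem_union_right _ (Finset.mem_image_of_mem _ hy)⟩

theorem map_fst_twoFiberMeasure (x x' : ℝ) (ρ σ : Measure ℝ) :
    (twoFiberMeasure x x' ρ σ).map Prod.fst =
      ρ Set.univ • Measure.dirac x + σ Set.univ • Measure.dirac x' := by
  simp only [twoFiberMeasure, Measure.map_add _ _ measurable_fst,
    Measure.map_map measurable_fst measurable_prodMk_left, Function.comp_def, Measure.map_const]

theorem map_snd_twoFiberMeasure (x x' : ℝ) (ρ σ : Measure ℝ) :
    (twoFiberMeasure x x' ρ σ).map Prod.snd = ρ + σ := by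
  simp only [twoFiberMeasure, Measure.map_add _ _ measurable_snd,
    Measure.map_map measurable_snd measurable_prodMk_left, Function.comp_def, Measure.map_id']

variable [IsFiniteMeasure ρ] [IsFiniteMeasure σ]

theorem integral_twoFiberMeasure {F : Type*} [NormedAddCommGroup F] [NormedSpace ℝ F]
    (hS : ∀ᵐ y ∂ρ, y ∈ S) (hT : ∀ᵐ y ∂σ, y ∈ T) (f : ℝ × ℝ → F) :
    ∫ p, f p ∂twoFiberMeasure x x' ρ σ = ∫ y, f (x, y) ∂ρ + ∫ y, f (x', y) ∂σ := by
  have hx := measurableEmbedding_prodMk_left (β := ℝ) x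
  have hx' := measurableEmbedding_prodMk_left (β := ℝ) x'
  rw [twoFiberMeasure, integral_add_measure, hx.integral_map, hx'.integral_map]
  · exact hx.integrable_map_iff.2 (integrable_of_ae_mem_finset hS _)
  · exact hx'.integrable_map_iff.2 (integrable_of_ae_mem_finset hT _)

theorem setIntegral_fiber_twoFiberMeasure (hS : ∀ᵐ y ∂ρ, y ∈ S) (hT : ∀ᵐ y ∂σ, y ∈ T) (u : ℝ) :
    ∫ p in {p : ℝ × ℝ | p.1 = u}, p.2 ∂twoFiberMeasure x x' ρ σ =
      (if x = u then ∫ y, y ∂ρ else 0) + if x' = u then ∫ y, y ∂σ else 0 := by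
  have hu : MeasurableSet {p : ℝ × ℝ | p.1 = u} := measurable_fst (measurableSet_singleton u)
  rw [← integral_indicator hu, integral_twoFiberMeasure hS hT]
  by_cases hx : x = u <;> by_cases hx' : x' = u <;> simp [Set.indicator, hx, hx']

theorem isCompetitor_twoFiberMeasure_swap (hS : ∀ᵐ y ∂ρ, y ∈ S) (hT : ∀ᵐ y ∂σ, y ∈ T)
    (hmass : ρ Set.univ = σ Set.univ) (hmean : ∫ y, y ∂ρ = ∫ y, y ∂σ) :
    IsCompetitor (twoFiberMeasure x x' ρ σ) (twoFiberMeasure x' x ρ σ) := by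
  obtain ⟨U, -, hU⟩ : HasFiniteSupportIn (twoFiberMeasure x' x ρ σ) Set.univ :=
    hasFiniteSupportIn_twoFiberMeasure hS hT (fun _ _ => trivial) fun _ _ => trivial
  refine ⟨⟨U, hU⟩, ?_, ?_, fun u => ?_⟩
  · rw [map_fst_twoFiberMeasure, map_fst_twoFiberMeasure, hmass, add_comm]
  · rw [map_snd_twoFiberMeasure, map_snd_twoFiberMeasure]
  · rw [setIntegral_fiber_twoFiberMeasure hS hT, setIntegral_fiber_twoFiberMeasure hS hT, hmean,
      add_comm]

end TwoFiber

namespace IsMinMonotonicitySet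

variable {c c' : ℝ → ℝ → ℝ} {Γ : Set (ℝ × ℝ)}

theorem integral_increment_le_and_le_of_eq (hΓ : IsMinMonotonicitySet c c' Γ)
    {x x' : ℝ} {ρ σ : Measure ℝ} [IsFiniteMeasure ρ] [IsFiniteMeasure σ] {S T : Finset ℝ}
    (hS : ∀ᵐ y ∂ρ, y ∈ S) (hT : ∀ᵐ y ∂σ, y ∈ T)
    (hSΓ : ∀ y ∈ S, (x, y) ∈ Γ) (hTΓ : ∀ y ∈ T, (x', y) ∈ Γ)
    (hmass : ρ Set.univ = σ Set.univ) (hmean : ∫ y, y ∂ρ = ∫ y, y ∂σ) :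
    (∫ y, (c x' y - c x y) ∂σ ≤ ∫ y, (c x' y - c x y) ∂ρ) ∧
      (∫ y, (c x' y - c x y) ∂σ = ∫ y, (c x' y - c x y) ∂ρ →
        ∫ y, (c' x' y - c' x y) ∂ρ ≤ ∫ y, (c' x' y - c' x y) ∂σ) := by
  have hρ (f : ℝ → ℝ) : Integrable f ρ := integrable_of_ae_mem_finset hS f
  have hσ (f : ℝ → ℝ) : Integrable f σ := integrable_of_ae_mem_finset hT f
  obtain ⟨hc, hc'⟩ := hΓ _ inferInstance (hasFiniteSupportIn_twoFiberMeasure hS hT hSΓ hTΓ) _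
    (isCompetitor_twoFiberMeasure_swap hS hT hmass hmean)
  simp only [integral_twoFiberMeasure hS hT] at hc hc'
  simp only [integral_sub (hρ _) (hρ _), integral_sub (hσ _) (hσ _)]
  exact ⟨by linarith, fun h => by linarith [hc' (by linarith)]⟩

theorem increment_le_chord_and_chord_le_of_eq (hΓ : IsMinMonotonicitySet c c' Γ)
    {x x' y₁ y₂ a b : ℝ} (ha : 0 ≤ a) (hb : 0 ≤ b) (hab : a + b = 1)
    (h₁ : (x, y₁) ∈ Γ) (h₂ : (x, y₂) ∈ Γ) (h' : (x', a * y₁ + b * y₂) ∈ Γ) :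
    (c x' (a * y₁ + b * y₂) - c x (a * y₁ + b * y₂) ≤
        a * (c x' y₁ - c x y₁) + b * (c x' y₂ - c x y₂)) ∧
      (c x' (a * y₁ + b * y₂) - c x (a * y₁ + b * y₂) =
          a * (c x' y₁ - c x y₁) + b * (c x' y₂ - c x y₂) →
        a * (c' x' y₁ - c' x y₁) + b * (c' x' y₂ - c' x y₂) ≤
          c' x' (a * y₁ + b * y₂) - c' x (a * y₁ + b * y₂)) := by
  lift a to NNReal using ha
  lift b to NNReal using hb
  have hab' : (a : ENNReal) + b = 1 := mod_cast hab
  have hT : ∀ᵐ y ∂Measure.dirac (a * y₁ + b * y₂), y ∈ ({(a * y₁ + b * y₂ : ℝ)} : Finset ℝ) := by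
    simp [ae_dirac_eq]
  have exchange := hΓ.integral_increment_le_and_le_of_eq (x := x) (x' := x')
    (ae_mem_pair_smul_dirac_add_smul_dirac a b y₁ y₂) hT (by simp [h₁, h₂]) (by simpa using h')
    (by simp [hab']) (by simp [integral_smul_dirac_add_smul_dirac, NNReal.smul_def])
  simpa only [integral_smul_dirac_add_smul_dirac, integral_dirac, NNReal.smul_def, smul_eq_mul]
    using exchange

end IsMinMonotonicitySet

theorem strictConvexOn_const_mul {E : Type*} [AddCommGroup E] [Module ℝ E] {s : Set E} {f : E → ℝ}
    (hf : StrictConvexOn ℝ s f) {r : ℝ} (hr : 0 < r) : StrictConvexOn ℝ s fun y => r * f y := by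
  refine ⟨hf.1, fun y hy z hz hyz a b ha hb hab => ?_⟩
  calc r * f (a • y + b • z) < r * (a • f y + b • f z) := by
        gcongr
        exact hf.2 hy hz hyz ha hb hab
    _ = a • (r * f y) + b • (r * f z) := by simp only [smul_eq_mul]; ring

section AbsCost

variable {x x' : ℝ}

theorem abs_add_sub_abs_add {y : ℝ} (hx : x ≤ x') (hy : -x ≤ y) : |x' + y| - |x + y| = x' - x := by
  rw [abs_of_nonneg (by linarith), abs_of_nonneg (by linarith)]
  ring

theorem concaveOn_abs_add_sub_abs_add (hx : x ≤ x') :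
    ConcaveOn ℝ (Set.Ici (-x)) fun y => |x' + y| - |x + y| :=
  (concaveOn_const (x' - x) (convex_Ici _)).congr fun _ hy => (abs_add_sub_abs_add hx hy).symm

theorem strictConvexOn_abs_add_mul_sq_sub (hx : x < x') :
    StrictConvexOn ℝ (Set.Ici (-x)) fun y => |x' + y| * y ^ 2 - |x + y| * y ^ 2 := by
  have hsq : StrictConvexOn ℝ (Set.Ici (-x)) fun y : ℝ => y ^ 2 :=
    (even_two.strictConvexOn_pow two_ne_zero).subset (Set.subset_univ _) (convex_Ici _)
  refine (strictConvexOn_const_mul hsq (sub_pos.2 hx)).congr fun y hy => ?_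
  simp only [← abs_add_sub_abs_add hx.le hy, sub_mul]

end AbsCost

theorem min_forbidden_interior_general {c c' : ℝ → ℝ → ℝ} {Γ : Set (ℝ × ℝ)}
    (hΓ : IsMinMonotonicitySet c c' Γ) {x x' ym yp y' : ℝ} {s : Set ℝ}
    (hc : ConcaveOn ℝ s fun y => c x' y - c x y)
    (hc' : StrictConvexOn ℝ s fun y => c' x' y - c' x y) (hym : ym ∈ s) (hyp : yp ∈ s)
    (hp : (x, yp) ∈ Γ) (hm : (x, ym) ∈ Γ) (h' : (x', y') ∈ Γ) :
    ¬(ym < y' ∧ y' < yp) := by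
  rintro ⟨hlt, hgt⟩
  obtain ⟨a, b, ha, hb, hab, rfl⟩ : y' ∈ openSegment ℝ ym yp := by
    rw [openSegment_eq_Ioo (hlt.trans hgt)]
    exact ⟨hlt, hgt⟩
  obtain ⟨le_chord, ge_chord'⟩ :=
    hΓ.increment_le_chord_and_chord_le_of_eq ha.le hb.le hab hm hp h'
  have chord_le := hc.2 hym hyp ha.le hb.le hab
  have lt_chord' := hc'.2 hym hyp (hlt.trans hgt).ne ha hb hab
  exact lt_chord'.not_ge (ge_chord' (le_chord.antisymm chord_le))

/-- Corollary 9 (minimising case): on the monotonicity set of a minimising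
(and secondarily maximising) martingale transport for `c(x,y) = |x+y|`,
`c'(x,y) = |x+y|·y²`, with `supp μ ⊆ [0,∞)`: if `(x,y⁺), (x,y⁻), (x',y') ∈ Γ`
with `-x' < -x ≤ y⁻ < y⁺`, then `y⁻ < y' < y⁺` is impossible. -/
theorem min_forbidden_interior
    (μ ν : Measure ℝ) [IsProbabilityMeasure μ] [IsProbabilityMeasure ν]
    (hconv : InConvexOrder μ ν)
    (hsupp : μ (Set.Iio 0) = 0)
    (Γ : Set (ℝ × ℝ))
    (hΓ : IsMinMonotonicitySet (fun x y => |x + y|) (fun x y => |x + y| * y ^ 2) Γ)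
    (x x' ym yp y' : ℝ)
    (hp : (x, yp) ∈ Γ) (hm : (x, ym) ∈ Γ) (h' : (x', y') ∈ Γ)
    (h1 : -x' < -x) (h2 : -x ≤ ym) (h3 : ym < yp) :
    ¬(ym < y' ∧ y' < yp) :=
  min_forbidden_interior_general hΓ (concaveOn_abs_add_sub_abs_add (neg_lt_neg_iff.1 h1).le)
    (strictConvexOn_abs_add_mul_sq_sub (neg_lt_neg_iff.1 h1)) h2 (h2.trans h3.le) hp hm h'
end
end

section
/- Let μ ⪯ ν be probability measures on ℝ in convex order and let Γ ⊆ ℝ² be a maximising monotonicity set for the pair of cost functions c(x,y) := |x+y| and c'(x,y) := |x+y|y². Let y⁻ < y < y⁺ be reals (with y⁻, y, y⁺ ∈ supp(ν)) and λ ∈ [0,1] with y = (1−λ)y⁻ + λy⁺, and define f(t) := (1−λ)|t+y⁻| + λ|t+y⁺| − |t+y| and g(t) := (1−λ)|t+y⁻|(y⁻)² + λ|t+y⁺|(y⁺)² − |t+y|y². Then: (i) there do not exist x, x' ∈ ℝ with (x,y⁻), (x,y⁺), (x',y) ∈ Γ and f(x) < f(x'); (ii) there do not exist x, x' ∈ ℝ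 with (x,y⁻), (x,y⁺), (x',y) ∈ Γ, f(x) = f(x') and g(x) > g(x'). -/
open MeasureTheory

noncomputable section

/-!
Exchanging the conditional laws carried by two fibres produces a competitor as soon as these laws
have equal mass and equal mean. The theorem compares the fibre law `(1 - λ) δ_{y⁻} + λ δ_{y⁺}` over
`x` with its barycentre `δ_y` over `x'`: the exchange changes the cost by `f x' - f x` and the
secondary cost by `g x' - g x`.
-/

theorem integrable_of_compl_finset_null {α E : Type*} [MeasurableSpace α]
    [MeasurableSingletonClass α] [NormedAddCommGroup E] {μ : Measure α} [IsFiniteMeasure μ]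
    {S : Finset α} (hS : μ (↑S : Set α)ᶜ = 0) (f : α → E) : Integrable f μ := by
  rw [← Measure.restrict_eq_self_of_ae_mem (mem_ae_iff.2 hS)]
  exact IntegrableOn.finset

section FiberPair

variable {X Y : Type*} [MeasurableSpace X] [MeasurableSpace Y] {x x' : X} {μ μ' : Measure Y}

/-- The measure on `X × Y` that carries `μ` on the fibre over `x` and `μ'` on the fibre over `x'`.
The two contributions are added when `x = x'`. -/
def fiberPair (x x' : X) (μ μ' : Measure Y) : Measure (X × Y) :=
  μ.map (Prod.mk x) + μ'.map (Prod.mk x')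

instance [IsFiniteMeasure μ] [IsFiniteMeasure μ'] : IsFiniteMeasure (fiberPair x x' μ μ') := by
  unfold fiberPair
  infer_instance

theorem map_fst_fiberPair : (fiberPair x x' μ μ').map Prod.fst =
    μ Set.univ • Measure.dirac x + μ' Set.univ • Measure.dirac x' := by
  simp only [fiberPair, Measure.map_add _ _ measurable_fst,
    Measure.map_map measurable_fst measurable_prodMk_left, Function.comp_def, Measure.map_const]

theorem map_snd_fiberPair : (fiberPair x x' μ μ').map Prod.snd = μ + μ' := by
  simp only [fiberPair, Measure.map_add _ _ measurable_snd,
    Measure.map_map measurable_snd measurable_prodMk_left, Function.comp_def, Measure.map_id']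

variable [MeasurableSingletonClass X]

theorem fiberPair_apply (A : Set (X × Y)) :
    fiberPair x x' μ μ' A = μ (Prod.mk x ⁻¹' A) + μ' (Prod.mk x' ⁻¹' A) := by
  simp only [fiberPair, Measure.add_apply, (measurableEmbedding_prodMk_left _).map_apply]

theorem integral_fiberPair {E : Type*} [NormedAddCommGroup E] [NormedSpace ℝ E] {h : X × Y → E}
    (hμ : Integrable (fun y => h (x, y)) μ) (hμ' : Integrable (fun y => h (x', y)) μ') :
    ∫ p, h p ∂fiberPair x x' μ μ' = ∫ y, h (x, y) ∂μ + ∫ y, h (x', y) ∂μ' := by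
  rw [fiberPair, integral_add_measure ((measurableEmbedding_prodMk_left x).integrable_map_iff.2 hμ)
    ((measurableEmbedding_prodMk_left x').integrable_map_iff.2 hμ')]
  simp only [(measurableEmbedding_prodMk_left _).integral_map]

theorem exists_finset_fiberPair_compl_null {S S' : Finset Y} (hS : μ (↑S : Set Y)ᶜ = 0)
    (hS' : μ' (↑S' : Set Y)ᶜ = 0) {Γ : Set (X × Y)} (hΓ : ∀ y ∈ S, (x, y) ∈ Γ)
    (hΓ' : ∀ y ∈ S', (x', y) ∈ Γ) :
    ∃ T : Finset (X × Y), ↑T ⊆ Γ ∧ fiberPair x x' μ μ' (↑T : Set (X × Y))ᶜ = 0 := by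
  classical
  refine ⟨S.image (Prod.mk x) ∪ S'.image (Prod.mk x'), ?_, ?_⟩
  · simpa [Set.subset_def, or_imp, forall_and] using ⟨hΓ, hΓ'⟩
  · rw [fiberPair_apply, add_eq_zero, Set.preimage_compl, Set.preimage_compl]
    constructor
    · refine measure_mono_null (Set.compl_subset_compl.2 fun y hy => ?_) hS
      exact Finset.mem_union_left _ (Finset.mem_image_of_mem _ hy)
    · refine measure_mono_null (Set.compl_subset_compl.2 fun y hy => ?_) hS'
      exact Finset.mem_union_right _ (Finset.mem_image_of_mem _ hy)

end FiberPair

section FiberSwap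

variable {x x' : ℝ} {μ μ' : Measure ℝ}

theorem setIntegral_snd_fiberPair (hμ : Integrable id μ) (hμ' : Integrable id μ') (t : ℝ) :
    ∫ p in {p : ℝ × ℝ | p.1 = t}, p.2 ∂fiberPair x x' μ μ' =
      (if x = t then ∫ y, y ∂μ else 0) + if x' = t then ∫ y, y ∂μ' else 0 := by
  have hfiber : MeasurableSet {p : ℝ × ℝ | p.1 = t} := measurable_fst (measurableSet_singleton t)
  rw [← integral_indicator hfiber, integral_fiberPair]
  · simp only [Set.indicator_apply, Set.mem_ofPred_eq]
    split_ifs <;> simp only [integral_zero]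
  all_goals
    simp only [Set.indicator_apply, Set.mem_ofPred_eq]
    split_ifs
    · assumption
    · exact integrable_zero _ _ _

variable [IsFiniteMeasure μ] [IsFiniteMeasure μ'] {S S' : Finset ℝ}

theorem isCompetitor_fiberPair_swap (hS : μ (↑S : Set ℝ)ᶜ = 0) (hS' : μ' (↑S' : Set ℝ)ᶜ = 0)
    (hmass : μ Set.univ = μ' Set.univ) (hmean : ∫ y, y ∂μ = ∫ y, y ∂μ') :
    IsCompetitor (fiberPair x x' μ μ') (fiberPair x' x μ μ') := by
  have hμ : Integrable id μ := integrable_of_compl_finset_null hS id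
  have hμ' : Integrable id μ' := integrable_of_compl_finset_null hS' id
  obtain ⟨T, -, hT⟩ := exists_finset_fiberPair_compl_null (x := x') (x' := x) hS hS'
    (fun _ _ => Set.mem_univ _) (fun _ _ => Set.mem_univ _)
  refine ⟨⟨T, hT⟩, ?_, ?_, fun t => ?_⟩
  · rw [map_fst_fiberPair, map_fst_fiberPair, hmass, add_comm]
  · rw [map_snd_fiberPair, map_snd_fiberPair]
  · rw [setIntegral_snd_fiberPair hμ hμ', setIntegral_snd_fiberPair hμ hμ', hmean, add_comm]

theorem IsMaxMonotonicitySet.fiber_swap {c c' : ℝ → ℝ → ℝ} {Γ : Set (ℝ × ℝ)}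
    (hΓ : IsMaxMonotonicitySet c c' Γ)
    (hS : μ (↑S : Set ℝ)ᶜ = 0) (hS' : μ' (↑S' : Set ℝ)ᶜ = 0)
    (hSΓ : ∀ y ∈ S, (x, y) ∈ Γ) (hSΓ' : ∀ y ∈ S', (x', y) ∈ Γ)
    (hmass : μ Set.univ = μ' Set.univ) (hmean : ∫ y, y ∂μ = ∫ y, y ∂μ') :
    (∫ y, c x' y ∂μ + ∫ y, c x y ∂μ' ≤ ∫ y, c x y ∂μ + ∫ y, c x' y ∂μ') ∧
    (∫ y, c x y ∂μ + ∫ y, c x' y ∂μ' = ∫ y, c x' y ∂μ + ∫ y, c x y ∂μ' →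
      ∫ y, c' x y ∂μ + ∫ y, c' x' y ∂μ' ≤ ∫ y, c' x' y ∂μ + ∫ y, c' x y ∂μ') := by
  have integral_eq (k : ℝ → ℝ → ℝ) (s t : ℝ) :
      ∫ p, k p.1 p.2 ∂fiberPair s t μ μ' = ∫ y, k s y ∂μ + ∫ y, k t y ∂μ' :=
    integral_fiberPair (integrable_of_compl_finset_null hS _)
      (integrable_of_compl_finset_null hS' _)
  simpa only [integral_eq] using hΓ (fiberPair x x' μ μ') inferInstance
    (exists_finset_fiberPair_compl_null hS hS' hSΓ hSΓ') _
    (isCompetitor_fiberPair_swap hS hS' hmass hmean)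

end FiberSwap

section TwoPointLaw

variable {Y : Type*} [MeasurableSpace Y] {lam : ℝ}

/-- The law `(1 - lam) δ_a + lam δ_b`. `ENNReal.ofReal` truncates negative weights to `0`, so this
is the intended measure only for `lam ∈ [0, 1]`. -/
def twoPointLaw (lam : ℝ) (a b : Y) : Measure Y :=
  ENNReal.ofReal (1 - lam) • Measure.dirac a + ENNReal.ofReal lam • Measure.dirac b

theorem isProbabilityMeasure_twoPointLaw (hlam : lam ∈ Set.Icc (0 : ℝ) 1) (a b : Y) :
    IsProbabilityMeasure (twoPointLaw lam a b) := by
  constructor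
  simp [twoPointLaw, ← ENNReal.ofReal_add (sub_nonneg.2 hlam.2) hlam.1]

variable [MeasurableSingletonClass Y]

theorem twoPointLaw_compl_null [DecidableEq Y] (a b : Y) :
    twoPointLaw lam a b (↑({a, b} : Finset Y) : Set Y)ᶜ = 0 := by
  simp [twoPointLaw]

theorem integral_twoPointLaw {E : Type*} [NormedAddCommGroup E] [NormedSpace ℝ E] [CompleteSpace E]
    (hlam : lam ∈ Set.Icc (0 : ℝ) 1) (a b : Y) (h : Y → E) :
    ∫ y, h y ∂twoPointLaw lam a b = (1 - lam) • h a + lam • h b := by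
  have integrable_smul_dirac (w : ℝ) (z : Y) :
      Integrable h (ENNReal.ofReal w • Measure.dirac z) :=
    (integrable_dirac enorm_lt_top).smul_measure ENNReal.ofReal_ne_top
  rw [twoPointLaw, integral_add_measure (integrable_smul_dirac _ _) (integrable_smul_dirac _ _)]
  simp only [integral_smul_measure, integral_dirac, ENNReal.toReal_ofReal (sub_nonneg.2 hlam.2),
    ENNReal.toReal_ofReal hlam.1]

end TwoPointLaw

theorem IsMaxMonotonicitySet.barycenter_swap {c c' : ℝ → ℝ → ℝ} {Γ : Set (ℝ × ℝ)}
    (hΓ : IsMaxMonotonicitySet c c' Γ) {ym y yp lam : ℝ} (hlam : lam ∈ Set.Icc (0 : ℝ) 1)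
    (hconvcomb : y = (1 - lam) * ym + lam * yp) {x x' : ℝ}
    (hm : (x, ym) ∈ Γ) (hp : (x, yp) ∈ Γ) (hy : (x', y) ∈ Γ) :
    ((1 - lam) * c x' ym + lam * c x' yp + c x y ≤
      (1 - lam) * c x ym + lam * c x yp + c x' y) ∧
    ((1 - lam) * c x ym + lam * c x yp + c x' y =
        (1 - lam) * c x' ym + lam * c x' yp + c x y →
      (1 - lam) * c' x ym + lam * c' x yp + c' x' y ≤
        (1 - lam) * c' x' ym + lam * c' x' yp + c' x y) := by
  have := isProbabilityMeasure_twoPointLaw hlam ym yp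
  have hdirac : Measure.dirac y (↑({y} : Finset ℝ) : Set ℝ)ᶜ = 0 := by simp
  have hmean : ∫ z, z ∂twoPointLaw lam ym yp = ∫ z, z ∂Measure.dirac y := by
    simp only [integral_twoPointLaw hlam, integral_dirac, smul_eq_mul, hconvcomb]
  simpa only [integral_twoPointLaw hlam, integral_dirac, smul_eq_mul] using
    hΓ.fiber_swap (twoPointLaw_compl_null ym yp) hdirac (by simp [hm, hp]) (by simpa using hy)
      (by simp only [measure_univ]) hmean

theorem max_variational_configurations_general {c c' : ℝ → ℝ → ℝ} {Γ : Set (ℝ × ℝ)}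
    (hΓ : IsMaxMonotonicitySet c c' Γ) {ym y yp lam : ℝ} (hlam : lam ∈ Set.Icc (0 : ℝ) 1)
    (hconvcomb : y = (1 - lam) * ym + lam * yp) {f g : ℝ → ℝ}
    (hf : f = fun t => (1 - lam) * c t ym + lam * c t yp - c t y)
    (hg : g = fun t => (1 - lam) * c' t ym + lam * c' t yp - c' t y) :
    (¬ ∃ x x' : ℝ, (x, ym) ∈ Γ ∧ (x, yp) ∈ Γ ∧ (x', y) ∈ Γ ∧ f x < f x') ∧
    (¬ ∃ x x' : ℝ, (x, ym) ∈ Γ ∧ (x, yp) ∈ Γ ∧ (x', y) ∈ Γ ∧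
      f x = f x' ∧ g x' < g x) := by
  subst hf hg
  constructor
  · rintro ⟨x, x', hm, hp, hy, hlt⟩
    linarith [(hΓ.barycenter_swap hlam hconvcomb hm hp hy).1]
  · rintro ⟨x, x', hm, hp, hy, heq, hlt⟩
    linarith [(hΓ.barycenter_swap hlam hconvcomb hm hp hy).2 (by linarith)]

/-- Lemma (maximising case): forbidden configurations on the monotonicity set of
a maximising (and secondarily minimising) martingale transport for the cost
`c(x,y) = |x+y|` with secondary cost `c'(x,y) = |x+y|·y²`, where
`y⁻ < y < y⁺` lie in the support of `ν`. -/
theorem max_variational_configurations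
    (μ ν : Measure ℝ) [IsProbabilityMeasure μ] [IsProbabilityMeasure ν]
    (hconv : InConvexOrder μ ν)
    (Γ : Set (ℝ × ℝ))
    (hΓ : IsMaxMonotonicitySet (fun x y => |x + y|) (fun x y => |x + y| * y ^ 2) Γ)
    (ym y yp : ℝ) (hy1 : ym < y) (hy2 : y < yp)
    (hsm : ∀ ε : ℝ, 0 < ε → 0 < ν (Set.Ioo (ym - ε) (ym + ε)))
    (hs : ∀ ε : ℝ, 0 < ε → 0 < ν (Set.Ioo (y - ε) (y + ε)))
    (hsp : ∀ ε : ℝ, 0 < ε → 0 < ν (Set.Ioo (yp - ε) (yp + ε)))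
    (lam : ℝ) (hlam : lam ∈ Set.Icc (0 : ℝ) 1)
    (hconvcomb : y = (1 - lam) * ym + lam * yp)
    (f g : ℝ → ℝ)
    (hf : f = fun t => (1 - lam) * |t + ym| + lam * |t + yp| - |t + y|)
    (hg : g = fun t =>
      (1 - lam) * |t + ym| * ym ^ 2 + lam * |t + yp| * yp ^ 2 - |t + y| * y ^ 2) :
    (¬ ∃ x x' : ℝ, (x, ym) ∈ Γ ∧ (x, yp) ∈ Γ ∧ (x', y) ∈ Γ ∧ f x < f x') ∧
    (¬ ∃ x x' : ℝ, (x, ym) ∈ Γ ∧ (x, yp) ∈ Γ ∧ (x', y) ∈ Γ ∧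
      f x = f x' ∧ g x' < g x) := by
  exact max_variational_configurations_general hΓ hlam hconvcomb hf
    (by simpa only [mul_assoc] using hg)
end
end

section
/- Let μ ⪯ ν be probability measures on ℝ in convex order and let Γ ⊆ ℝ² be a maximising monotonicity set for the cost function c(x,y) := |x+y|, i.e. for every measure α on ℝ² with finite support contained in Γ and every competitor α' of α one has ∫ |x+y| dα ≥ ∫ |x+y| dα'. Suppose (x,y⁻), (x,y⁺), (x',y') ∈ Γ with y⁻ < y' < y⁺. Then none of the following constellations is possible: (I1) x' < x and y⁻ < −x' ≤ y'; (I2) x < x' and y' ≤ −x' < y⁺; (I3) x' < x and −x ≤ y⁻ < −x' < y⁺; (I4) x < x' and y⁻ < −x' < y⁺ ≤ −x. -/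
open MeasureTheory

noncomputable section

/-- `Γ` is a maximising monotonicity set for the single cost `c`: for every
finitely supported measure `α` with support in `Γ` and every competitor `α'`,
`∫ c dα ≥ ∫ c dα'`. -/
def IsMaxMonotonicitySetSingle (c : ℝ → ℝ → ℝ) (Γ : Set (ℝ × ℝ)) : Prop :=
  ∀ α : Measure (ℝ × ℝ), IsFiniteMeasure α → HasFiniteSupportIn α Γ →
    ∀ α' : Measure (ℝ × ℝ), IsCompetitor α α' →
      ∫ p : ℝ × ℝ, c p.1 p.2 ∂α' ≤ ∫ p : ℝ × ℝ, c p.1 p.2 ∂α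

/-!
Put mass on `(x, y₀)` and `(x, y₁)` and on `(x', y')` with `y'` the barycenter of the first two.
Interchanging `x` and `x'` gives a competitor, so for a maximising monotonicity set the chord of
`D y = c x y - c x' y` over `[y₀, y₁]` lies above `D` at `y'`. For `c x y = |x + y|`, equality cases
of the triangle inequality contradict this: in (I1) and (I2), `D` attains its maximum `|x - x'|` at
`y'` but not at one of the endpoints; in (I3) and (I4), `|x + ·|` is affine on the segment while
`|x' + ·|` has its kink in the interior, so that `D` lies strictly above its chord.
-/

open scoped NNReal

section EqualityInTriangleInequality

variable {R : Type*} [CommRing R] [LinearOrder R] [IsStrictOrderedRing R] {a b : R}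

theorem abs_combo_le (ha : 0 ≤ a) (hb : 0 ≤ b) (u v : R) :
    |a * u + b * v| ≤ a * |u| + b * |v| := by
  simpa only [abs_mul, abs_of_nonneg ha, abs_of_nonneg hb] using abs_add_le (a * u) (b * v)

theorem abs_combo_eq_iff (ha : 0 < a) (hb : 0 < b) (u v : R) :
    |a * u + b * v| = a * |u| + b * |v| ↔ 0 ≤ u * v :=
  calc
    _ ↔ |a * u + b * v| = |a * u| + |b * v| := by
      rw [abs_mul, abs_mul, abs_of_pos ha, abs_of_pos hb]
    _ ↔ 0 ≤ (a * u) * (b * v) := (abs_add_eq_add_abs_iff _ _).trans mul_nonneg_iff.symm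
    _ ↔ 0 ≤ u * v := by rw [mul_mul_mul_comm, mul_nonneg_iff_of_pos_left (mul_pos ha hb)]

theorem abs_combo_lt_iff (ha : 0 < a) (hb : 0 < b) (u v : R) :
    |a * u + b * v| < a * |u| + b * |v| ↔ u * v < 0 := by
  rw [(abs_combo_le ha.le hb.le u v).lt_iff_ne, Ne, abs_combo_eq_iff ha hb, not_le]

end EqualityInTriangleInequality

section ForkMeasure

variable {a b : ℝ≥0} {x x' y₀ y₁ : ℝ} {Γ : Set (ℝ × ℝ)}

/-- A fork on the fibre over `x`, with masses `a` and `b` at the heights `y₀` and `y₁`, together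
with a unit mass over `x'` at the height `a * y₀ + b * y₁`. For `a + b = 1` this height is the
barycenter of the fork, and interchanging `x` and `x'` gives a competitor. -/
def forkMeasure (a b : ℝ≥0) (x x' y₀ y₁ : ℝ) : Measure (ℝ × ℝ) :=
  a • Measure.dirac (x, y₀) + b • Measure.dirac (x, y₁) + Measure.dirac (x', a * y₀ + b * y₁)

instance : IsFiniteMeasure (forkMeasure a b x x' y₀ y₁) := by
  unfold forkMeasure
  infer_instance

theorem integral_forkMeasure (F : ℝ × ℝ → ℝ) :
    ∫ p, F p ∂forkMeasure a b x x' y₀ y₁ =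
      a * F (x, y₀) + b * F (x, y₁) + F (x', a * y₀ + b * y₁) := by
  have integrable_F (p : ℝ × ℝ) : Integrable F (Measure.dirac p) := integrable_dirac (by simp)
  have integrable_smul (w : ℝ≥0) (p : ℝ × ℝ) : Integrable F (w • Measure.dirac p) :=
    (integrable_F p).smul_measure_nnreal
  rw [forkMeasure, integral_add_measure ((integrable_smul _ _).add_measure (integrable_smul _ _))
      (integrable_F _), integral_add_measure (integrable_smul _ _) (integrable_smul _ _)]
  simp only [integral_smul_nnreal_measure, integral_dirac, NNReal.smul_def, smul_eq_mul]

theorem hasFiniteSupportIn_forkMeasure (h₀ : (x, y₀) ∈ Γ) (h₁ : (x, y₁) ∈ Γ)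
    (h' : (x', a * y₀ + b * y₁) ∈ Γ) : HasFiniteSupportIn (forkMeasure a b x x' y₀ y₁) Γ := by
  refine ⟨{(x, y₀), (x, y₁), (x', a * y₀ + b * y₁)}, ?_, ?_⟩
  · simp [Set.insert_subset_iff, h₀, h₁, h']
  · simp [forkMeasure]

theorem map_fst_forkMeasure (hab : a + b = 1) :
    (forkMeasure a b x x' y₀ y₁).map Prod.fst = Measure.dirac x + Measure.dirac x' := by
  simp only [forkMeasure, Measure.map_add _ _ measurable_fst, Measure.map_smul,
    Measure.map_dirac' measurable_fst, ← add_smul, hab, one_smul]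

theorem map_snd_forkMeasure :
    (forkMeasure a b x x' y₀ y₁).map Prod.snd =
      a • Measure.dirac y₀ + b • Measure.dirac y₁ + Measure.dirac (a * y₀ + b * y₁) := by
  simp only [forkMeasure, Measure.map_add _ _ measurable_snd, Measure.map_smul,
    Measure.map_dirac' measurable_snd]

theorem setIntegral_snd_forkMeasure (t : ℝ) :
    ∫ p in {p : ℝ × ℝ | p.1 = t}, p.2 ∂forkMeasure a b x x' y₀ y₁ =
      (if x = t then a * y₀ + b * y₁ else 0) + (if x' = t then a * y₀ + b * y₁ else 0) := by
  have measurableSet_fibre : MeasurableSet {p : ℝ × ℝ | p.1 = t} :=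
    measurable_fst (measurableSet_singleton t)
  rw [← integral_indicator measurableSet_fibre, integral_forkMeasure]
  simp only [Set.indicator_apply, Set.mem_ofPred_eq]
  split_ifs <;> ring

theorem isCompetitor_forkMeasure_swap (hab : a + b = 1) :
    IsCompetitor (forkMeasure a b x x' y₀ y₁) (forkMeasure a b x' x y₀ y₁) := by
  refine ⟨?_, ?_, ?_, fun t => ?_⟩
  · obtain ⟨S, -, hS⟩ := hasFiniteSupportIn_forkMeasure (a := a) (b := b) (x := x') (x' := x)
      (Set.mem_univ (x', y₀)) (Set.mem_univ (x', y₁)) (Set.mem_univ _)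
    exact ⟨S, hS⟩
  · rw [map_fst_forkMeasure hab, map_fst_forkMeasure hab, add_comm]
  · rw [map_snd_forkMeasure, map_snd_forkMeasure]
  · rw [setIntegral_snd_forkMeasure, setIntegral_snd_forkMeasure, add_comm]

end ForkMeasure

/-- The difference at height `y` between the costs over `x` and over `x'`: the cost lost per unit
of mass moved from `(x, y)` to `(x', y)`. -/
def costDiff (c : ℝ → ℝ → ℝ) (x x' y : ℝ) : ℝ := c x y - c x' y

theorem IsMaxMonotonicitySetSingle.costDiff_le {c : ℝ → ℝ → ℝ} {Γ : Set (ℝ × ℝ)}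
    (hΓ : IsMaxMonotonicitySetSingle c Γ) {a b x x' y₀ y₁ : ℝ} (ha : 0 ≤ a) (hb : 0 ≤ b)
    (hab : a + b = 1) (h₀ : (x, y₀) ∈ Γ) (h₁ : (x, y₁) ∈ Γ) (h' : (x', a * y₀ + b * y₁) ∈ Γ) :
    costDiff c x x' (a * y₀ + b * y₁) ≤ a * costDiff c x x' y₀ + b * costDiff c x x' y₁ := by
  lift a to ℝ≥0 using ha
  lift b to ℝ≥0 using hb
  have swap_le := hΓ (forkMeasure a b x x' y₀ y₁) inferInstance
    (hasFiniteSupportIn_forkMeasure h₀ h₁ h') (forkMeasure a b x' x y₀ y₁)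
    (isCompetitor_forkMeasure_swap (by exact_mod_cast hab))
  simp only [integral_forkMeasure] at swap_le
  unfold costDiff
  linarith

section AbsAddCost

variable {a b x x' y y₀ y₁ : ℝ}

theorem costDiff_abs_add_eq_abs_sub_iff :
    costDiff (fun x y => |x + y|) x x' y = |x - x'| ↔ 0 ≤ (x - x') * (x' + y) := by
  simpa [costDiff, sub_eq_iff_eq_add, ← add_assoc] using
    abs_combo_eq_iff one_pos one_pos (x - x') (x' + y)

theorem costDiff_abs_add_lt_abs_sub_iff :
    costDiff (fun x y => |x + y|) x x' y < |x - x'| ↔ (x - x') * (x' + y) < 0 := by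
  simpa [costDiff, sub_lt_iff_lt_add, ← add_assoc] using
    abs_combo_lt_iff one_pos one_pos (x - x') (x' + y)

theorem costDiff_abs_add_le_abs_sub : costDiff (fun x y => |x + y|) x x' y ≤ |x - x'| := by
  simpa only [costDiff, add_sub_add_right_eq_sub] using abs_sub_abs_le_abs_sub (x + y) (x' + y)

theorem costDiff_abs_add_chord_lt_of_maximal (ha : 0 < a) (hb : 0 ≤ b) (hab : a + b = 1)
    (h₀ : (x - x') * (x' + y₀) < 0) (h' : 0 ≤ (x - x') * (x' + (a * y₀ + b * y₁))) :
    a * costDiff (fun x y => |x + y|) x x' y₀ + b * costDiff (fun x y => |x + y|) x x' y₁ <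
      costDiff (fun x y => |x + y|) x x' (a * y₀ + b * y₁) :=
  calc
    _ < a * |x - x'| + b * |x - x'| :=
      add_lt_add_of_lt_of_le
        (mul_lt_mul_of_pos_left (costDiff_abs_add_lt_abs_sub_iff.2 h₀) ha)
        (mul_le_mul_of_nonneg_left costDiff_abs_add_le_abs_sub hb)
    _ = |x - x'| := by rw [← add_mul, hab, one_mul]
    _ = _ := (costDiff_abs_add_eq_abs_sub_iff.2 h').symm

theorem costDiff_abs_add_chord_lt_of_kink (ha : 0 < a) (hb : 0 < b) (hab : a + b = 1)
    (hx : 0 ≤ (x + y₀) * (x + y₁)) (hx' : (x' + y₀) * (x' + y₁) < 0) :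
    a * costDiff (fun x y => |x + y|) x x' y₀ + b * costDiff (fun x y => |x + y|) x x' y₁ <
      costDiff (fun x y => |x + y|) x x' (a * y₀ + b * y₁) := by
  have add_combo (z : ℝ) : z + (a * y₀ + b * y₁) = a * (z + y₀) + b * (z + y₁) := by
    linear_combination -z * hab
  have affine_x : |x + (a * y₀ + b * y₁)| = a * |x + y₀| + b * |x + y₁| := by
    rw [add_combo, abs_combo_eq_iff ha hb]
    exact hx
  have strict_x' : |x' + (a * y₀ + b * y₁)| < a * |x' + y₀| + b * |x' + y₁| := by
    rw [add_combo, abs_combo_lt_iff ha hb]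
    exact hx'
  unfold costDiff
  linarith

end AbsAddCost

theorem max_forbidden_constellations_general
    {Γ : Set (ℝ × ℝ)} (hΓ : IsMaxMonotonicitySetSingle (fun x y => |x + y|) Γ)
    {x x' ym yp y' : ℝ} (hm : (x, ym) ∈ Γ) (hp : (x, yp) ∈ Γ) (h' : (x', y') ∈ Γ)
    (h1 : ym < y') (h2 : y' < yp) :
    ¬(x' < x ∧ ym < -x' ∧ -x' ≤ y') ∧
    ¬(x < x' ∧ y' ≤ -x' ∧ -x' < yp) ∧
    ¬(x' < x ∧ -x ≤ ym ∧ ym < -x' ∧ -x' < yp) ∧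
    ¬(x < x' ∧ ym < -x' ∧ -x' < yp ∧ yp ≤ -x) := by
  obtain ⟨a, b, ha, hb, hab, rfl⟩ : y' ∈ openSegment ℝ ym yp := by
    rw [openSegment_eq_Ioo (h1.trans h2)]
    exact ⟨h1, h2⟩
  simp only [smul_eq_mul] at h' h1 h2 ⊢
  have chord_ge := hΓ.costDiff_le ha.le hb.le hab hm hp h'
  refine ⟨?_, ?_, ?_, ?_⟩
  · rintro ⟨hx, hym, hy'⟩
    exact chord_ge.not_gt <| costDiff_abs_add_chord_lt_of_maximal ha hb.le hab
      (mul_neg_of_pos_of_neg (by linarith) (by linarith))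
      (mul_nonneg (by linarith) (by linarith))
  · rintro ⟨hx, hy', hyp⟩
    rw [add_comm (a * ym)] at h' hy'
    have hba : b + a = 1 := (add_comm b a).trans hab
    exact (hΓ.costDiff_le hb.le ha.le hba hp hm h').not_gt <|
      costDiff_abs_add_chord_lt_of_maximal hb ha.le hba
        (mul_neg_of_neg_of_pos (by linarith) (by linarith))
        (mul_nonneg_of_nonpos_of_nonpos (by linarith) (by linarith))
  · rintro ⟨-, hxm, hm', hp'⟩
    exact chord_ge.not_gt <| costDiff_abs_add_chord_lt_of_kink ha hb hab
      (mul_nonneg (by linarith) (by linarith)) (mul_neg_of_neg_of_pos (by linarith) (by linarith))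
  · rintro ⟨-, hm', hp', hxp⟩
    exact chord_ge.not_gt <| costDiff_abs_add_chord_lt_of_kink ha hb hab
      (mul_nonneg_of_nonpos_of_nonpos (by linarith) (by linarith))
      (mul_neg_of_neg_of_pos (by linarith) (by linarith))

/-- Corollary (forbidden constellations for a maximiser of `|x+y|`): if
`(x,y⁻), (x,y⁺), (x',y') ∈ Γ` with `y⁻ < y' < y⁺`, then none of the
constellations (I1)–(I4) is possible. -/
theorem max_forbidden_constellations
    (μ ν : Measure ℝ) [IsProbabilityMeasure μ] [IsProbabilityMeasure ν]
    (hconv : InConvexOrder μ ν)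
    (Γ : Set (ℝ × ℝ))
    (hΓ : IsMaxMonotonicitySetSingle (fun x y => |x + y|) Γ)
    (x x' ym yp y' : ℝ)
    (hm : (x, ym) ∈ Γ) (hp : (x, yp) ∈ Γ) (h' : (x', y') ∈ Γ)
    (h1 : ym < y') (h2 : y' < yp) :
    ¬(x' < x ∧ ym < -x' ∧ -x' ≤ y') ∧
    ¬(x < x' ∧ y' ≤ -x' ∧ -x' < yp) ∧
    ¬(x' < x ∧ -x ≤ ym ∧ ym < -x' ∧ -x' < yp) ∧
    ¬(x < x' ∧ ym < -x' ∧ -x' < yp ∧ yp ≤ -x) :=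
  max_forbidden_constellations_general hΓ hm hp h' h1 h2
end
end

section
/- Suppose (X_t)_{t∈[0,2]} is a martingale on a filtered probability space with respect to a probability law ℚ, with each X_t integrable. Set μ := Law(X₁) and ν := Law(X₂), fix K ∈ ℝ, and choose π ∈ 𝓜(μ,ν) such that ∫ (x+y−K)₊ dπ ≥ ∫ (x+y−K)₊ dπ' for all π' ∈ 𝓜(μ,ν). Then for every 0 ≤ t ≤ 1, E_ℚ[(X_t + X₂ − K)₊] ≤ ∫ (x+y−K)₊ dπ(x,y). -/
open MeasureTheory

noncomputable section

/-- A martingale coupling of `μ` and `ν`. -/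
def IsMartingaleCoupling (μ ν : Measure ℝ) (π : Measure (ℝ × ℝ)) : Prop :=
  IsProbabilityMeasure π ∧ π.map Prod.fst = μ ∧ π.map Prod.snd = ν ∧
    ∀ h : ℝ → ℝ, Measurable h → (∃ C, ∀ x, |h x| ≤ C) →
      ∫ p : ℝ × ℝ, h p.1 * (p.2 - p.1) ∂π = 0

/-!
Condition on `Z = X_t` and take two conditionally independent copies `(X, Y)`, `(X', Y')` of
`(X₁, X₂)`. Match the values of `X` above `Z` with values of `X'` below `Z`, so that the
displacement `X - X'` of a matched pair averages to `X - Z`. With a symmetric probability, let the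
members of a matched pair exchange their outcomes `Y` and `Y'`. This preserves the laws of `(Z, X)`
and `(Z, Y)`. A pair is always exchanged when it is crossed, meaning that the member with the
smaller `X` alone has its outcome above `K - Z`; the exchange probability of the other pairs is
tuned so that `Y` keeps its conditional mean `X`. The crossed pairs are the only ones
contributing negatively to `E[(X - Z) 1_{Y > K - Z}]`, so after the exchange this expectation is
nonnegative. Since `1_{Y > K - Z}` is a subgradient of `(· + Y - K)₊` at `Z`, the new law gives
`X + Y` a payoff at least as large as that of `Z + Y`, which is unchanged.
-/

open ProbabilityTheory

section Measure

variable {α β : Type*} {mα : MeasurableSpace α} {mβ : MeasurableSpace β}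

lemma compProd_mono_left {μ ν : Measure α} [SFinite μ] [SFinite ν] (h : μ ≤ ν)
    (κ : Kernel α β) [IsSFiniteKernel κ] : μ ⊗ₘ κ ≤ ν ⊗ₘ κ :=
  Measure.le_iff.2 fun s hs => by
    simpa only [Measure.compProd_apply hs] using lintegral_mono' h le_rfl

lemma integrable_comp_fst_compProd {μ : Measure α} [SFinite μ] (κ : Kernel α β)
    [IsMarkovKernel κ] {f : α → ℝ} (hf : Integrable f μ) :
    Integrable (fun p => f p.1) (μ ⊗ₘ κ) := by
  refine Integrable.comp_measurable (f := Prod.fst) ?_ measurable_fst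
  rwa [← Measure.fst, Measure.fst_compProd]

lemma map_fst_withDensity_compProd (μ : Measure α) [SFinite μ] (κ : Kernel α β)
    [IsSFiniteKernel κ] {f : α × β → ENNReal} (hf : Measurable f) :
    ((μ ⊗ₘ κ).withDensity f).map Prod.fst = μ.withDensity fun a => ∫⁻ b, f (a, b) ∂κ a := by
  ext s hs
  rw [Measure.map_apply measurable_fst hs, withDensity_apply _ (measurable_fst hs),
    withDensity_apply _ hs, ← Set.prod_univ, Measure.setLIntegral_compProd hf hs .univ]
  simp only [Measure.restrict_univ]

lemma measurePreserving_withDensity {μ : Measure α} {ν : Measure β} {σ : α → β}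
    (hσ : MeasurePreserving σ μ ν) {f : β → ENNReal} (hf : Measurable f) :
    MeasurePreserving σ (μ.withDensity (f ∘ σ)) (ν.withDensity f) := by
  refine ⟨hσ.measurable, Measure.ext fun s hs => ?_⟩
  rw [Measure.map_apply hσ.measurable hs, withDensity_apply _ (hσ.measurable hs),
    withDensity_apply _ hs, ← hσ.map_eq, setLIntegral_map hs hf hσ.measurable]
  rfl

variable {Γ M N : Measure α} [IsFiniteMeasure M]

lemma map_sub_add_of_map_eq (hM : M ≤ Γ) {f : α → β} (hf : Measurable f)
    (hMN : M.map f = N.map f) : (Γ - M + N).map f = Γ.map f := by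
  rw [Measure.map_add _ _ hf, ← hMN, ← Measure.map_add _ _ hf, Measure.sub_add_cancel_of_le hM]

lemma integral_sub_add (hM : M ≤ Γ) {f : α → ℝ} (hΓ : Integrable f Γ) (hN : Integrable f N) :
    ∫ a, f a ∂(Γ - M + N) = ∫ a, f a ∂Γ - ∫ a, f a ∂M + ∫ a, f a ∂N := by
  have hsub : ∫ a, f a ∂Γ = ∫ a, f a ∂(Γ - M) + ∫ a, f a ∂M := by
    rw [← integral_add_measure (hΓ.mono_measure Measure.sub_le) (hΓ.mono_measure hM),
      Measure.sub_add_cancel_of_le hM]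
  rw [integral_add_measure (hΓ.mono_measure Measure.sub_le) hN, hsub, add_sub_cancel_right]

end Measure

/-- The symmetric weight which makes deviations `a` and `b` of opposite signs balance:
`2 |a b| / |a - b|` for opposite signs, and `0` otherwise (also for `a = b = 0`, where the
denominator vanishes). -/
def pairWeight (a b : ℝ) : ℝ := (|a * b| - a * b) / |a - b|

lemma pairWeight_comm (a b : ℝ) : pairWeight a b = pairWeight b a := by
  rw [pairWeight, pairWeight, mul_comm, abs_sub_comm]

lemma pairWeight_nonneg (a b : ℝ) : 0 ≤ pairWeight a b :=
  div_nonneg (sub_nonneg.2 (le_abs_self _)) (abs_nonneg _)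

lemma pairWeight_eq_zero {a b : ℝ} (h : 0 ≤ a * b) : pairWeight a b = 0 := by
  rw [pairWeight, abs_of_nonneg h, sub_self, zero_div]

lemma pairWeight_mul_sub (a b : ℝ) : pairWeight a b * (a - b) = |b| * a - |a| * b := by
  rcases le_or_gt 0 (a * b) with hab | hab
  · rw [pairWeight_eq_zero hab, zero_mul]
    rcases mul_nonneg_iff.1 hab with ⟨ha, hb⟩ | ⟨ha, hb⟩
    · rw [abs_of_nonneg ha, abs_of_nonneg hb]; ring
    · rw [abs_of_nonpos ha, abs_of_nonpos hb]; ring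
  · rw [pairWeight, abs_of_neg hab]
    rcases mul_neg_iff.1 hab with ⟨ha, hb⟩ | ⟨ha, hb⟩
    · have hpos : 0 < a - b := by linarith
      rw [abs_of_pos hpos, div_mul_cancel₀ _ hpos.ne', abs_of_pos ha, abs_of_neg hb]; ring
    · have hneg : a - b < 0 := by linarith
      rw [abs_of_neg hneg, div_neg, neg_mul, div_mul_cancel₀ _ hneg.ne, abs_of_neg ha,
        abs_of_pos hb]
      ring

lemma sign_mul_le_abs (a b : ℝ) : SignType.sign a * b ≤ |b| := by
  rcases lt_trichotomy a 0 with ha | rfl | ha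
  · simpa [ha] using neg_le_abs b
  · simp
  · simpa [ha] using le_abs_self b

lemma pairWeight_le (a b : ℝ) : pairWeight a b ≤ |b| - SignType.sign a * b := by
  have hsign : 0 ≤ |b| - SignType.sign a * b := sub_nonneg.2 (sign_mul_le_abs a b)
  rcases le_or_gt 0 (a * b) with hab | hab
  · rwa [pairWeight_eq_zero hab]
  have habs : |a| ≤ |a - b| := by
    rcases mul_neg_iff.1 hab with ⟨ha, hb⟩ | ⟨ha, hb⟩
    · rw [abs_of_pos ha]; exact (by linarith : a ≤ a - b).trans (le_abs_self _)
    · rw [abs_of_neg ha]; exact (by linarith : -a ≤ -(a - b)).trans (neg_le_abs _)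
  refine div_le_of_le_mul₀ (abs_nonneg _) hsign ?_
  calc |a * b| - a * b = (|b| - SignType.sign a * b) * |a| := by
        rw [sub_mul, mul_right_comm, sign_mul_abs, abs_mul, mul_comm |b|]
    _ ≤ (|b| - SignType.sign a * b) * |a - b| := mul_le_mul_of_nonneg_left habs hsign

@[fun_prop] lemma measurable_pairWeight {α : Type*} [MeasurableSpace α] {f g : α → ℝ}
    (hf : Measurable f) (hg : Measurable g) : Measurable fun a => pairWeight (f a) (g a) := by
  unfold pairWeight
  fun_prop

/-- The kernel `κ` consists of integrable laws, the law `κ a` having mean `m a` at *every* `a`. -/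
structure HasMean {α : Type*} [MeasurableSpace α] (κ : Kernel α ℝ) (m : α → ℝ) : Prop where
  integrable : ∀ a, Integrable (fun x => x) (κ a)
  integral_eq : ∀ a, ∫ x, x ∂κ a = m a

namespace HasMean

variable {α : Type*} [MeasurableSpace α] {κ : Kernel α ℝ} [IsMarkovKernel κ] {m : α → ℝ}

lemma measurable (hκ : HasMean κ m) : Measurable m := by
  have h : Measurable fun a => ∫ x, x ∂κ a :=
    (measurable_snd.stronglyMeasurable (α := α × ℝ)).integral_kernel_prod_right'.measurable
  simpa only [hκ.integral_eq] using h

lemma integrable_sub (hκ : HasMean κ m) (a : α) : Integrable (fun x => x - m a) (κ a) :=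
  (hκ.integrable a).sub (integrable_const _)

lemma integral_sub_eq_zero (hκ : HasMean κ m) (a : α) : ∫ x, (x - m a) ∂κ a = 0 := by
  rw [integral_sub (hκ.integrable a) (integrable_const _), hκ.integral_eq, integral_const,
    probReal_univ, one_smul, sub_self]

variable {μ : Measure α} [SFinite μ]

lemma integrable_mean (hκ : HasMean κ m) (hx : Integrable (fun p => p.2) (μ ⊗ₘ κ)) :
    Integrable m μ := by
  simpa only [Kernel.prodMkLeft_apply, Kernel.const_apply, hκ.integral_eq] using
    hx.integral_compProd (κ := .const Unit μ) (a := ())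

lemma integrable_sub_mean (hκ : HasMean κ m) (hx : Integrable (fun p => p.2) (μ ⊗ₘ κ)) :
    Integrable (fun p => p.2 - m p.1) (μ ⊗ₘ κ) :=
  hx.sub (integrable_comp_fst_compProd κ (hκ.integrable_mean hx))

lemma integral_mul_sub_mean (hκ : HasMean κ m) (hx : Integrable (fun p => p.2) (μ ⊗ₘ κ))
    {f : α → ℝ} (hf : Measurable f) {C : ℝ} (hC : ∀ a, |f a| ≤ C) :
    ∫ p, f p.1 * (p.2 - m p.1) ∂(μ ⊗ₘ κ) = 0 := by
  have hint : Integrable (fun p => f p.1 * (p.2 - m p.1)) (μ ⊗ₘ κ) :=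
    (hκ.integrable_sub_mean hx).bdd_mul (hf.comp measurable_fst).aestronglyMeasurable
      (.of_forall fun p => hC p.1)
  rw [Measure.integral_compProd hint]
  simp only [integral_const_mul, hκ.integral_sub_eq_zero, mul_zero, integral_zero]

end HasMean

section TwoCopies

variable {S E : Type*} [MeasurableSpace S] [MeasurableSpace E]

/-- The exchange of the two copies `x`, `x'` in a point `((s, x), x')`. -/
def swapCopies : (S × E) × E ≃ᵐ (S × E) × E :=
  MeasurableEquiv.prodAssoc.trans <|
    ((MeasurableEquiv.refl S).prodCongr MeasurableEquiv.prodComm).trans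
      MeasurableEquiv.prodAssoc.symm

@[simp] lemma swapCopies_apply (p : (S × E) × E) :
    swapCopies p = ((p.1.1, p.2), p.1.2) := rfl

/-- The law of `((s, x), x')` with `s` distributed as `ρ` and `x`, `x'` drawn independently
from `η s`. -/
def twoCopies (ρ : Measure S) (η : Kernel S E) : Measure ((S × E) × E) :=
  (ρ ⊗ₘ η) ⊗ₘ η.prodMkRight E

variable {ρ : Measure S} [SFinite ρ] {η : Kernel S E} [IsSFiniteKernel η]

lemma lintegral_twoCopies {f : (S × E) × E → ENNReal} (hf : Measurable f) :
    ∫⁻ p, f p ∂twoCopies ρ η = ∫⁻ s, ∫⁻ x, ∫⁻ x', f ((s, x), x') ∂η s ∂η s ∂ρ := by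
  rw [twoCopies, Measure.lintegral_compProd hf,
    Measure.lintegral_compProd hf.lintegral_kernel_prod_right']
  rfl

lemma measurePreserving_swapCopies_twoCopies :
    MeasurePreserving swapCopies (twoCopies ρ η) (twoCopies ρ η) := by
  refine ⟨swapCopies.measurable, Measure.ext_of_lintegral _ fun f hf => ?_⟩
  have hf' : Measurable fun p => f (swapCopies p) := hf.comp swapCopies.measurable
  rw [lintegral_map hf swapCopies.measurable, lintegral_twoCopies hf, lintegral_twoCopies hf']
  exact lintegral_congr fun s => lintegral_lintegral_swap (by fun_prop)

end TwoCopies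

lemma integral_eq_half_integral_add_comp {α : Type*} [MeasurableSpace α] {μ : Measure α}
    {σ : α ≃ᵐ α} (hσ : MeasurePreserving σ μ μ) {f : α → ℝ} (hf : Integrable f μ) :
    ∫ a, f a ∂μ = 2⁻¹ * ∫ a, (f a + f (σ a)) ∂μ := by
  have hfσ : Integrable (fun a => f (σ a)) μ := hσ.integrable_comp_of_integrable hf
  rw [integral_add hf hfσ, hσ.integral_comp' f]
  ring

section PairKernel

variable {S E F : Type*} [MeasurableSpace S] [MeasurableSpace E] [MeasurableSpace F]

/-- The joint law of outcomes `(y, y')` given `((s, x), x')`, with `y` and `y'` drawn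
independently from `κ (s, x)` and `κ (s, x')`. -/
def pairKernel (κ : Kernel (S × E) F) : Kernel ((S × E) × E) (F × F) :=
  κ.prodMkRight E ×ₖ κ.comap (fun p : (S × E) × E => (p.1.1, p.2)) (by fun_prop)

instance (κ : Kernel (S × E) F) [IsMarkovKernel κ] : IsMarkovKernel (pairKernel κ) := by
  unfold pairKernel; infer_instance

/-- The exchange of the two members `(x, y)`, `(x', y')` of a pair
`(((s, x), x'), (y, y'))`. -/
def swapOutcomes : ((S × E) × E) × (F × F) ≃ᵐ ((S × E) × E) × (F × F) :=
  swapCopies.prodCongr MeasurableEquiv.prodComm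

@[simp] lemma swapOutcomes_apply (n : ((S × E) × E) × (F × F)) :
    swapOutcomes n = (swapCopies n.1, n.2.swap) := rfl

/-- The first member of a pair with its own outcome: `((s, x), y)`. -/
def ownOutcome (n : ((S × E) × E) × (F × F)) : (S × E) × F := (n.1.1, n.2.1)

/-- The first member of a pair with the outcome of the second one: `((s, x), y')`. -/
def otherOutcome (n : ((S × E) × E) × (F × F)) : (S × E) × F := (n.1.1, n.2.2)

@[fun_prop] lemma measurable_ownOutcome : Measurable (ownOutcome : _ → (S × E) × F) := by
  unfold ownOutcome; fun_prop

@[fun_prop] lemma measurable_otherOutcome : Measurable (otherOutcome : _ → (S × E) × F) := by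
  unfold otherOutcome; fun_prop

variable {κ : Kernel (S × E) F} [IsMarkovKernel κ]

lemma pairKernel_apply (p : (S × E) × E) :
    pairKernel κ p = (κ p.1).prod (κ (p.1.1, p.2)) := by
  rw [pairKernel, Kernel.prod_apply, Kernel.prodMkRight_apply, Kernel.comap_apply]

lemma map_swap_pairKernel (p : (S × E) × E) :
    (pairKernel κ p).map MeasurableEquiv.prodComm = pairKernel κ (swapCopies p) := by
  rw [pairKernel_apply, pairKernel_apply]
  exact Measure.prod_swap

variable {P : Measure ((S × E) × E)} [SFinite P]

lemma measurePreserving_swapOutcomes (hP : MeasurePreserving swapCopies P P) :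
    MeasurePreserving swapOutcomes (P ⊗ₘ pairKernel κ) (P ⊗ₘ pairKernel κ) := by
  refine ⟨swapOutcomes.measurable, Measure.ext_of_lintegral _ fun f hf => ?_⟩
  have hf' : Measurable fun n => f (swapOutcomes n) := hf.comp swapOutcomes.measurable
  rw [lintegral_map hf swapOutcomes.measurable, Measure.lintegral_compProd hf',
    Measure.lintegral_compProd hf, ← hP.lintegral_comp hf.lintegral_kernel_prod_right']
  refine lintegral_congr fun p => ?_
  rw [← map_swap_pairKernel, lintegral_map_equiv]
  rfl

lemma map_ownOutcome_compProd_pairKernel :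
    (P ⊗ₘ pairKernel κ).map ownOutcome = P.map Prod.fst ⊗ₘ κ := by
  refine Measure.ext_of_lintegral _ fun f hf => ?_
  have hf' : Measurable fun n : ((S × E) × E) × (F × F) => f (ownOutcome n) :=
    hf.comp measurable_ownOutcome
  rw [lintegral_map hf measurable_ownOutcome, Measure.lintegral_compProd hf',
    Measure.lintegral_compProd hf,
    lintegral_map hf.lintegral_kernel_prod_right' measurable_fst]
  refine lintegral_congr fun p => ?_
  rw [pairKernel_apply, lintegral_prod _ (by unfold ownOutcome; fun_prop)]
  simp [ownOutcome]

/-- The law obtained from `Γ` when the mass of the pairs `M` exchanges its outcomes. Only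
first members are moved, because a symmetric `M` lists every pair in both orders. -/
def exchangeOutcomes (Γ : Measure ((S × E) × F)) (M : Measure (((S × E) × E) × (F × F))) :
    Measure ((S × E) × F) :=
  Γ - M.map ownOutcome + M.map otherOutcome

/-- A symmetric measure `M` on pairs whose first members can be taken out of `Γ`. -/
structure IsPairing (Γ : Measure ((S × E) × F)) (M : Measure (((S × E) × E) × (F × F))) :
    Prop where
  map_ownOutcome_le : M.map ownOutcome ≤ Γ
  measurePreserving : MeasurePreserving swapOutcomes M M

variable {Γ : Measure ((S × E) × F)} {M : Measure (((S × E) × E) × (F × F))}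

namespace IsPairing

lemma isFiniteMeasure [IsFiniteMeasure Γ] (hM : IsPairing Γ M) : IsFiniteMeasure M := by
  have := isFiniteMeasure_of_le Γ hM.map_ownOutcome_le
  exact Measure.isFiniteMeasure_of_map measurable_ownOutcome.aemeasurable

lemma withDensity (hM : IsPairing Γ M) {f : ((S × E) × E) × (F × F) → ENNReal}
    (hf : Measurable f) (hf_le : ∀ n, f n ≤ 1) (hf_swap : ∀ n, f (swapOutcomes n) = f n) :
    IsPairing Γ (M.withDensity f) where
  map_ownOutcome_le :=
    have hle : M.withDensity f ≤ M :=
      (withDensity_mono (.of_forall hf_le)).trans_eq withDensity_one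
    (Measure.map_mono hle measurable_ownOutcome).trans hM.map_ownOutcome_le
  measurePreserving := by
    simpa only [Function.comp_def, hf_swap] using
      measurePreserving_withDensity hM.measurePreserving hf

lemma integrable_own (hM : IsPairing Γ M) {f : (S × E) × F → ℝ} (hf : Integrable f Γ) :
    Integrable (fun n => f (ownOutcome n)) M :=
  (hf.mono_measure hM.map_ownOutcome_le).comp_measurable measurable_ownOutcome

lemma integrable_swap (hM : IsPairing Γ M) {f : (S × E) × F → ℝ} (hf : Integrable f Γ) :
    Integrable (fun n => f (ownOutcome (swapOutcomes n))) M :=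
  hM.measurePreserving.integrable_comp_of_integrable (hM.integrable_own hf)

lemma map_fst_exchangeOutcomes [IsFiniteMeasure M] (hM : IsPairing Γ M) :
    (exchangeOutcomes Γ M).map Prod.fst = Γ.map Prod.fst := by
  refine map_sub_add_of_map_eq hM.map_ownOutcome_le measurable_fst ?_
  rw [Measure.map_map measurable_fst measurable_ownOutcome,
    Measure.map_map measurable_fst measurable_otherOutcome]
  rfl

lemma map_outcome_exchangeOutcomes [IsFiniteMeasure M] (hM : IsPairing Γ M) :
    (exchangeOutcomes Γ M).map (fun p => (p.1.1, p.2)) = Γ.map fun p => (p.1.1, p.2) := by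
  let outcome : (S × E) × F → S × F := fun p => (p.1.1, p.2)
  have houtcome : Measurable outcome := by fun_prop
  refine map_sub_add_of_map_eq hM.map_ownOutcome_le houtcome ?_
  calc (M.map ownOutcome).map outcome = M.map (outcome ∘ ownOutcome) :=
        Measure.map_map houtcome measurable_ownOutcome
    _ = (M.map swapOutcomes).map (outcome ∘ ownOutcome) := by rw [hM.measurePreserving.map_eq]
    _ = M.map (outcome ∘ otherOutcome) :=
        Measure.map_map (houtcome.comp measurable_ownOutcome) swapOutcomes.measurable
    _ = (M.map otherOutcome).map outcome := (Measure.map_map houtcome measurable_otherOutcome).symm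

lemma integral_exchangeOutcomes [IsFiniteMeasure M] (hM : IsPairing Γ M)
    {f : (S × E) × F → ℝ} (hfm : Measurable f) (hf : Integrable f Γ)
    (hf' : Integrable (fun n => f (otherOutcome n)) M) :
    ∫ p, f p ∂exchangeOutcomes Γ M =
      ∫ p, f p ∂Γ + ∫ n, (f (otherOutcome n) - f (ownOutcome n)) ∂M := by
  have hother : Integrable f (M.map otherOutcome) :=
    (integrable_map_measure hfm.aestronglyMeasurable measurable_otherOutcome.aemeasurable).2 hf'
  rw [exchangeOutcomes, integral_sub_add hM.map_ownOutcome_le hf hother,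
    integral_map measurable_ownOutcome.aemeasurable hfm.aestronglyMeasurable,
    integral_map measurable_otherOutcome.aemeasurable hfm.aestronglyMeasurable,
    integral_sub hf' (hM.integrable_own hf)]
  ring

end IsPairing

end PairKernel

section MatchedPairs

variable {S : Type*} [MeasurableSpace S]

/-- The mean absolute deviation of the law `η s` from `m s`. -/
def meanDeviation (η : Kernel S ℝ) (m : S → ℝ) (s : S) : ℝ := ∫ x, |x - m s| ∂η s

/-- The density of matched pairs with respect to `twoCopies`. Where `meanDeviation` vanishes the
division gives `0`, which is harmless because `η s` is then a Dirac mass. -/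
def matchWeight (η : Kernel S ℝ) (m : S → ℝ) (p : (S × ℝ) × ℝ) : ℝ :=
  pairWeight (p.1.2 - m p.1.1) (p.2 - m p.1.1) / meanDeviation η m p.1.1

/-- The law of pairs `((s, x), x')` with `x` and `x'` on opposite sides of `m s`, weighted so that
`x - x'` integrates over `x'` to `x - m s`. -/
def matchedPairs (ρ : Measure S) (η : Kernel S ℝ) (m : S → ℝ) : Measure ((S × ℝ) × ℝ) :=
  (twoCopies ρ η).withDensity fun p => ENNReal.ofReal (matchWeight η m p)

instance (ρ : Measure S) (η : Kernel S ℝ) (m : S → ℝ) : SFinite (matchedPairs ρ η m) := by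
  unfold matchedPairs twoCopies
  infer_instance

lemma matchWeight_swapCopies (η : Kernel S ℝ) (m : S → ℝ) (p : (S × ℝ) × ℝ) :
    matchWeight η m (swapCopies p) = matchWeight η m p := by
  simp only [matchWeight, swapCopies_apply, pairWeight_comm]

lemma matchWeight_nonneg (η : Kernel S ℝ) (m : S → ℝ) (p : (S × ℝ) × ℝ) :
    0 ≤ matchWeight η m p :=
  div_nonneg (pairWeight_nonneg _ _) (integral_nonneg fun _ => abs_nonneg _)

variable {ρ : Measure S} {η : Kernel S ℝ} [IsMarkovKernel η] {m : S → ℝ}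

lemma measurable_matchWeight (hm : Measurable m) : Measurable (matchWeight η m) := by
  have hdev : Measurable (meanDeviation η m) := by
    have : StronglyMeasurable fun p : S × ℝ => |p.2 - m p.1| :=
      Measurable.stronglyMeasurable (by fun_prop)
    exact this.integral_kernel_prod_right'.measurable
  unfold matchWeight
  fun_prop

lemma measurePreserving_swapCopies_matchedPairs [SFinite ρ] (hm : Measurable m) :
    MeasurePreserving swapCopies (matchedPairs ρ η m) (matchedPairs ρ η m) := by
  have h := measurePreserving_withDensity
    (measurePreserving_swapCopies_twoCopies (ρ := ρ) (η := η))
    (measurable_matchWeight (η := η) hm).ennreal_ofReal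
  simpa only [matchedPairs, Function.comp_def, matchWeight_swapCopies] using h

lemma integrable_pairWeight (hη : HasMean η m) (s : S) (a : ℝ) :
    Integrable (fun x => pairWeight a (x - m s)) (η s) := by
  have hdev := hη.integrable_sub s
  have hbound : Integrable (fun x => |x - m s| - SignType.sign a * (x - m s)) (η s) :=
    hdev.abs.sub (hdev.const_mul _)
  refine hbound.mono' (Measurable.aestronglyMeasurable (by fun_prop)) (.of_forall fun x => ?_)
  rw [Real.norm_of_nonneg (pairWeight_nonneg _ _)]
  exact pairWeight_le a _

lemma integrable_matchWeight (hη : HasMean η m) (p : S × ℝ) :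
    Integrable (fun x' => matchWeight η m (p, x')) (η p.1) := by
  simpa only [matchWeight] using (integrable_pairWeight hη p.1 (p.2 - m p.1)).div_const _

lemma integral_matchWeight_le_one (hη : HasMean η m) (p : S × ℝ) :
    ∫ x', matchWeight η m (p, x') ∂η p.1 ≤ 1 := by
  have hdev := hη.integrable_sub p.1
  simp only [matchWeight, integral_div]
  refine div_le_one_of_le₀ ?_ (integral_nonneg fun _ => abs_nonneg _)
  calc ∫ x', pairWeight (p.2 - m p.1) (x' - m p.1) ∂η p.1
      ≤ ∫ x', (|x' - m p.1| - SignType.sign (p.2 - m p.1) * (x' - m p.1)) ∂η p.1 :=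
        integral_mono (integrable_pairWeight hη _ _) (hdev.abs.sub (hdev.const_mul _))
          fun x' => pairWeight_le _ _
    _ = meanDeviation η m p.1 := by
        rw [integral_sub hdev.abs (hdev.const_mul _), integral_const_mul, hη.integral_sub_eq_zero,
          mul_zero, sub_zero, meanDeviation]

lemma map_fst_matchedPairs_le (hη : HasMean η m) :
    (matchedPairs ρ η m).map Prod.fst ≤ ρ ⊗ₘ η := by
  rw [matchedPairs, twoCopies,
    map_fst_withDensity_compProd _ _ (measurable_matchWeight hη.measurable).ennreal_ofReal]
  refine (withDensity_mono (.of_forall fun p => ?_)).trans_eq withDensity_one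
  calc ∫⁻ x', ENNReal.ofReal (matchWeight η m (p, x')) ∂η p.1
      = ENNReal.ofReal (∫ x', matchWeight η m (p, x') ∂η p.1) :=
        (ofReal_integral_eq_lintegral_ofReal (integrable_matchWeight hη p)
          (.of_forall fun _ => matchWeight_nonneg _ _ _)).symm
    _ ≤ 1 := ENNReal.ofReal_le_one.2 (integral_matchWeight_le_one hη p)

lemma ae_integral_matchWeight_mul_sub (hη : HasMean η m) (s : S) :
    ∀ᵐ x ∂η s, ∫ x', matchWeight η m ((s, x), x') * (x - x') ∂η s = x - m s := by
  have hdev := hη.integrable_sub s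
  have hformula (x : ℝ) : ∫ x', matchWeight η m ((s, x), x') * (x - x') ∂η s =
      meanDeviation η m s * (x - m s) / meanDeviation η m s := by
    calc ∫ x', matchWeight η m ((s, x), x') * (x - x') ∂η s
        = ∫ x', (|x' - m s| * (x - m s) - |x - m s| * (x' - m s)) / meanDeviation η m s ∂η s := by
          refine integral_congr_ae (.of_forall fun x' => ?_)
          simp only [matchWeight]
          rw [← pairWeight_mul_sub, sub_sub_sub_cancel_right, div_mul_eq_mul_div]
      _ = _ := by
          rw [integral_div, integral_sub (hdev.abs.mul_const _) (hdev.const_mul _),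
            integral_mul_const, integral_const_mul, hη.integral_sub_eq_zero, mul_zero, sub_zero,
            meanDeviation]
  rcases eq_or_ne (meanDeviation η m s) 0 with hzero | hne
  · filter_upwards [(integral_eq_zero_iff_of_nonneg (fun _ => abs_nonneg _) hdev.abs).1 hzero]
      with x hx
    rw [hformula, abs_eq_zero.1 hx, mul_zero, zero_div]
  · exact .of_forall fun x => by rw [hformula, mul_div_cancel_left₀ _ hne]

lemma integrable_sub_matchedPairs [SFinite ρ] (hη : HasMean η m)
    (hx : Integrable (fun p : S × ℝ => p.2) (ρ ⊗ₘ η)) :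
    Integrable (fun p => p.1.2 - p.2) (matchedPairs ρ η m) := by
  have hfst : Integrable (fun p => p.1.2) (matchedPairs ρ η m) :=
    (hx.mono_measure (map_fst_matchedPairs_le hη)).comp_measurable measurable_fst
  have hswap := measurePreserving_swapCopies_matchedPairs (ρ := ρ) (η := η) hη.measurable
  have hsnd : Integrable (fun p => p.2) (matchedPairs ρ η m) :=
    (hswap.integrable_comp_of_integrable hfst).congr (.of_forall fun _ => rfl)
  exact hfst.sub hsnd

lemma integral_matchedPairs_mul_sub [SFinite ρ] (hη : HasMean η m)
    (hx : Integrable (fun p : S × ℝ => p.2) (ρ ⊗ₘ η)) {f : S × ℝ → ℝ} (hf : Measurable f)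
    {C : ℝ} (hC : ∀ p, |f p| ≤ C) :
    ∫ p, f p.1 * (p.1.2 - p.2) ∂matchedPairs ρ η m = ∫ p, f p * (p.2 - m p.1) ∂(ρ ⊗ₘ η) := by
  have hm := hη.measurable
  have hw := measurable_matchWeight (η := η) hm
  have hint : Integrable (fun p => f p.1 * (p.1.2 - p.2)) (matchedPairs ρ η m) :=
    (integrable_sub_matchedPairs hη hx).bdd_mul
      (hf.comp measurable_fst).aestronglyMeasurable (.of_forall fun p => hC p.1)
  rw [matchedPairs, integrable_withDensity_iff_integrable_smul' hw.ennreal_ofReal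
    (.of_forall fun _ => ENNReal.ofReal_lt_top)] at hint
  rw [matchedPairs, integral_withDensity_eq_integral_toReal_smul hw.ennreal_ofReal
    (.of_forall fun _ => ENNReal.ofReal_lt_top), twoCopies, Measure.integral_compProd hint]
  refine integral_congr_ae (Measure.ae_compProd_of_ae_ae ?_ (.of_forall fun s => ?_))
  · have hintegrand : Measurable fun p =>
        (ENNReal.ofReal (matchWeight η m p)).toReal • (f p.1 * (p.1.2 - p.2)) := by fun_prop
    exact measurableSet_eq_fun
      hintegrand.stronglyMeasurable.integral_kernel_prod_right'.measurable (by fun_prop)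
  filter_upwards [ae_integral_matchWeight_mul_sub hη s] with x hx
  rw [← hx, Kernel.prodMkRight_apply, ← integral_const_mul]
  refine integral_congr_ae (.of_forall fun x' => ?_)
  simp only [ENNReal.toReal_ofReal (matchWeight_nonneg _ _ _), smul_eq_mul]
  ring

end MatchedPairs

section Crossing

variable {S : Type*} {c : S → ℝ}

/-- The pairs whose member with the smaller `x` alone has its outcome above the threshold
`c s`. -/
def crossed (c : S → ℝ) : Set (((S × ℝ) × ℝ) × (ℝ × ℝ)) :=
  {n | n.1.1.2 < n.1.2 ∧ n.2.2 ≤ c n.1.1.1 ∧ c n.1.1.1 < n.2.1} ∪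
    {n | n.1.2 < n.1.1.2 ∧ n.2.1 ≤ c n.1.1.1 ∧ c n.1.1.1 < n.2.2}

/-- The indicator that the outcome `y` lies above the threshold `c s`. -/
def exceeds (c : S → ℝ) (s : S) (y : ℝ) : ℝ := if c s < y then 1 else 0

lemma abs_exceeds_le_one (s : S) (y : ℝ) : |exceeds c s y| ≤ 1 := by
  unfold exceeds
  split_ifs <;> simp

lemma measurable_exceeds [MeasurableSpace S] (hc : Measurable c) {α : Type*} [MeasurableSpace α]
    {f : α → S} {g : α → ℝ} (hf : Measurable f) (hg : Measurable g) :
    Measurable fun a => exceeds c (f a) (g a) :=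
  Measurable.ite (measurableSet_lt (hc.comp hf) hg) measurable_const measurable_const

/-- The contribution of a pair and of its swap to the integral of `exceeds c s y * (x - x')`. -/
def pairContribution (c : S → ℝ) (n : ((S × ℝ) × ℝ) × (ℝ × ℝ)) : ℝ :=
  (exceeds c n.1.1.1 n.2.1 - exceeds c n.1.1.1 n.2.2) * (n.1.1.2 - n.1.2)

lemma pairContribution_nonneg {n : ((S × ℝ) × ℝ) × (ℝ × ℝ)} (hn : n ∉ crossed c) :
    0 ≤ pairContribution c n := by
  simp only [crossed, Set.mem_union, Set.mem_ofPred_eq, not_or, not_and, not_lt] at hn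
  unfold pairContribution exceeds
  split_ifs <;> grind

end Crossing

section Exchange

variable {S : Type*} [MeasurableSpace S]

/-- The conditional mean of `|y' - y|` on crossed pairs, given `((s, x), x')`. -/
def crossedGap (κ : Kernel (S × ℝ) ℝ) (c : S → ℝ) (p : (S × ℝ) × ℝ) : ℝ :=
  ∫ q, (crossed c).indicator (fun n => |n.2.2 - n.2.1|) (p, q) ∂pairKernel κ p

/-- The probability `r` of exchanging an uncrossed pair, solving `r |x' - x| = (1 - r) G` with
`G` the `crossedGap`, which is the martingale condition for the exchange. For `x = x'` and `G = 0`
the division gives `0`. -/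
def uncrossedProb (κ : Kernel (S × ℝ) ℝ) (c : S → ℝ) (p : (S × ℝ) × ℝ) : ℝ :=
  crossedGap κ c p / (|p.2 - p.1.2| + crossedGap κ c p)

open Classical in
/-- The probability with which a pair exchanges its outcomes. -/
def exchangeProb (κ : Kernel (S × ℝ) ℝ) (c : S → ℝ) (n : ((S × ℝ) × ℝ) × (ℝ × ℝ)) : ℝ :=
  if n ∈ crossed c then 1 else uncrossedProb κ c n.1

variable {κ : Kernel (S × ℝ) ℝ} {c : S → ℝ}

lemma swapOutcomes_mem_crossed {n : ((S × ℝ) × ℝ) × (ℝ × ℝ)} :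
    swapOutcomes n ∈ crossed c ↔ n ∈ crossed c := by
  simp only [crossed, Set.mem_union, Set.mem_ofPred_eq, swapOutcomes_apply, swapCopies_apply,
    Prod.fst_swap, Prod.snd_swap, or_comm]

lemma indicator_crossed_swapOutcomes (n : ((S × ℝ) × ℝ) × (ℝ × ℝ)) :
    (crossed c).indicator (fun n => |n.2.2 - n.2.1|) (swapOutcomes n) =
      (crossed c).indicator (fun n => |n.2.2 - n.2.1|) n := by
  classical
  rw [Set.indicator_apply, Set.indicator_apply, swapOutcomes_mem_crossed, swapOutcomes_apply,
    Prod.fst_swap, Prod.snd_swap, abs_sub_comm]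

lemma measurableSet_crossed (hc : Measurable c) : MeasurableSet (crossed c) := by
  unfold crossed
  measurability

lemma crossedGap_nonneg (p : (S × ℝ) × ℝ) : 0 ≤ crossedGap κ c p :=
  integral_nonneg fun _ => Set.indicator_nonneg (fun _ _ => abs_nonneg _) _

lemma uncrossedProb_nonneg (p : (S × ℝ) × ℝ) : 0 ≤ uncrossedProb κ c p :=
  div_nonneg (crossedGap_nonneg p) (add_nonneg (abs_nonneg _) (crossedGap_nonneg p))

lemma uncrossedProb_le_one (p : (S × ℝ) × ℝ) : uncrossedProb κ c p ≤ 1 :=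
  div_le_one_of_le₀ (le_add_of_nonneg_left (abs_nonneg _))
    (add_nonneg (abs_nonneg _) (crossedGap_nonneg p))

lemma exchangeProb_nonneg (n : ((S × ℝ) × ℝ) × (ℝ × ℝ)) : 0 ≤ exchangeProb κ c n := by
  unfold exchangeProb
  split_ifs
  exacts [zero_le_one, uncrossedProb_nonneg _]

lemma exchangeProb_le_one (n : ((S × ℝ) × ℝ) × (ℝ × ℝ)) : exchangeProb κ c n ≤ 1 := by
  unfold exchangeProb
  split_ifs
  exacts [le_rfl, uncrossedProb_le_one _]

lemma exchangeProb_mul_sub (n : ((S × ℝ) × ℝ) × (ℝ × ℝ)) :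
    exchangeProb κ c n * (n.2.2 - n.2.1) =
      uncrossedProb κ c n.1 * (n.2.2 - n.2.1) -
        (1 - uncrossedProb κ c n.1) * SignType.sign (n.1.2 - n.1.1.2) *
          (crossed c).indicator (fun n => |n.2.2 - n.2.1|) n := by
  by_cases hn : n ∈ crossed c
  · rw [exchangeProb, if_pos hn, Set.indicator_of_mem hn]
    rcases hn with ⟨hx, hy, hy'⟩ | ⟨hx, hy, hy'⟩
    · rw [sign_pos (sub_pos.2 hx), abs_of_neg (by linarith), SignType.coe_one]; ring
    · rw [sign_neg (sub_neg.2 hx), abs_of_pos (by linarith), SignType.coe_neg_one]; ring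
  · rw [exchangeProb, if_neg hn, Set.indicator_of_notMem hn, mul_zero, sub_zero]

lemma exchangeProb_mul_pairContribution_le (n : ((S × ℝ) × ℝ) × (ℝ × ℝ)) :
    exchangeProb κ c n * pairContribution c n ≤ pairContribution c n := by
  by_cases hn : n ∈ crossed c
  · rw [exchangeProb, if_pos hn, one_mul]
  · exact mul_le_of_le_one_left (pairContribution_nonneg hn) (exchangeProb_le_one n)

variable [IsMarkovKernel κ]

lemma crossedGap_swapCopies (p : (S × ℝ) × ℝ) :
    crossedGap κ c (swapCopies p) = crossedGap κ c p := by
  rw [crossedGap, ← map_swap_pairKernel, integral_map_equiv]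
  refine integral_congr_ae (.of_forall fun q => ?_)
  exact indicator_crossed_swapOutcomes (p, q)

lemma exchangeProb_swapOutcomes (n : ((S × ℝ) × ℝ) × (ℝ × ℝ)) :
    exchangeProb κ c (swapOutcomes n) = exchangeProb κ c n := by
  have huncrossed : uncrossedProb κ c (swapCopies n.1) = uncrossedProb κ c n.1 := by
    rw [uncrossedProb, uncrossedProb, crossedGap_swapCopies, swapCopies_apply, abs_sub_comm]
  rw [exchangeProb, exchangeProb, swapOutcomes_mem_crossed, swapOutcomes_apply, huncrossed]

lemma measurable_exchangeProb (hc : Measurable c) : Measurable (exchangeProb κ c) := by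
  have hgap : Measurable ((crossed c).indicator fun n => |n.2.2 - n.2.1|) :=
    Measurable.indicator (by fun_prop) (measurableSet_crossed hc)
  have hcrossedGap : Measurable (crossedGap κ c) :=
    hgap.stronglyMeasurable.integral_kernel_prod_right'.measurable
  refine Measurable.ite (measurableSet_crossed hc) measurable_const ?_
  unfold uncrossedProb
  fun_prop

lemma integrable_outcome_sub (hκ : HasMean κ Prod.snd) (p : (S × ℝ) × ℝ) :
    Integrable (fun q => q.2 - q.1) (pairKernel κ p) := by
  rw [pairKernel_apply]
  exact ((hκ.integrable _).comp_snd _).sub ((hκ.integrable _).comp_fst _)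

lemma integral_outcome_sub (hκ : HasMean κ Prod.snd) (p : (S × ℝ) × ℝ) :
    ∫ q, (q.2 - q.1) ∂pairKernel κ p = p.2 - p.1.2 := by
  rw [pairKernel_apply, integral_sub ((hκ.integrable _).comp_snd _) ((hκ.integrable _).comp_fst _),
    integral_fun_snd (fun y => y), integral_fun_fst (fun y => y), probReal_univ, probReal_univ,
    one_smul, one_smul, hκ.integral_eq, hκ.integral_eq]

lemma integral_exchangeProb_mul_sub (hκ : HasMean κ Prod.snd) (hc : Measurable c)
    (p : (S × ℝ) × ℝ) :
    ∫ q, exchangeProb κ c (p, q) * (q.2 - q.1) ∂pairKernel κ p = 0 := by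
  have hsub := integrable_outcome_sub hκ p
  have hgap : Integrable (fun q => (crossed c).indicator (fun n => |n.2.2 - n.2.1|) (p, q))
      (pairKernel κ p) :=
    hsub.abs.indicator (measurableSet_crossed hc |>.preimage measurable_prodMk_left)
  set r := uncrossedProb κ c p with hr
  calc ∫ q, exchangeProb κ c (p, q) * (q.2 - q.1) ∂pairKernel κ p
      = ∫ q, (r * (q.2 - q.1) - (1 - r) * SignType.sign (p.2 - p.1.2) *
          (crossed c).indicator (fun n => |n.2.2 - n.2.1|) (p, q)) ∂pairKernel κ p :=
        integral_congr_ae (.of_forall fun q => exchangeProb_mul_sub (p, q))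
    _ = SignType.sign (p.2 - p.1.2) *
          (r * |p.2 - p.1.2| - (1 - r) * crossedGap κ c p) := by
        rw [integral_sub (hsub.const_mul _) (hgap.const_mul _), integral_const_mul,
          integral_const_mul, integral_outcome_sub hκ, ← crossedGap]
        linear_combination -r * sign_mul_abs (p.2 - p.1.2)
    _ = 0 := by
        rcases eq_or_ne (p.2 - p.1.2) 0 with hzero | hne
        · rw [hzero, sign_zero, SignType.coe_zero, zero_mul]
        have hpos : |p.2 - p.1.2| + crossedGap κ c p ≠ 0 :=
          (add_pos_of_pos_of_nonneg (abs_pos.2 hne) (crossedGap_nonneg p)).ne'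
        rw [hr, uncrossedProb, one_sub_div hpos]
        ring

end Exchange

section MartingaleExchange

variable {S : Type*} [MeasurableSpace S]

/-- The law of matched pairs `(((s, x), x'), (y, y'))` together with their outcomes. -/
def pairedOutcomes (ρ : Measure S) (η : Kernel S ℝ) (m : S → ℝ) (κ : Kernel (S × ℝ) ℝ) :
    Measure (((S × ℝ) × ℝ) × (ℝ × ℝ)) :=
  matchedPairs ρ η m ⊗ₘ pairKernel κ

/-- The part of the matched pairs that exchanges outcomes. -/
def exchangedPairs (ρ : Measure S) (η : Kernel S ℝ) (m : S → ℝ) (κ : Kernel (S × ℝ) ℝ)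
    (c : S → ℝ) : Measure (((S × ℝ) × ℝ) × (ℝ × ℝ)) :=
  (pairedOutcomes ρ η m κ).withDensity fun n => ENNReal.ofReal (exchangeProb κ c n)

variable {ρ : Measure S} {η : Kernel S ℝ} {m : S → ℝ} {κ : Kernel (S × ℝ) ℝ} [IsMarkovKernel κ]
  {c : S → ℝ}

lemma integrable_exchangedPairs_iff (hc : Measurable c) {f : ((S × ℝ) × ℝ) × (ℝ × ℝ) → ℝ} :
    Integrable f (exchangedPairs ρ η m κ c) ↔
      Integrable (fun n => exchangeProb κ c n * f n) (pairedOutcomes ρ η m κ) := by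
  rw [exchangedPairs, integrable_withDensity_iff_integrable_smul'
    (measurable_exchangeProb hc).ennreal_ofReal (.of_forall fun _ => ENNReal.ofReal_lt_top)]
  simp only [ENNReal.toReal_ofReal (exchangeProb_nonneg _), smul_eq_mul]

lemma integral_exchangedPairs (hc : Measurable c) (f : ((S × ℝ) × ℝ) × (ℝ × ℝ) → ℝ) :
    ∫ n, f n ∂exchangedPairs ρ η m κ c =
      ∫ n, exchangeProb κ c n * f n ∂pairedOutcomes ρ η m κ := by
  rw [exchangedPairs, integral_withDensity_eq_integral_toReal_smul
    (measurable_exchangeProb hc).ennreal_ofReal (.of_forall fun _ => ENNReal.ofReal_lt_top)]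
  simp only [ENNReal.toReal_ofReal (exchangeProb_nonneg _), smul_eq_mul]

variable [SFinite ρ] [IsMarkovKernel η]

lemma isPairing_pairedOutcomes (hη : HasMean η m) :
    IsPairing (ρ ⊗ₘ η ⊗ₘ κ) (pairedOutcomes ρ η m κ) where
  map_ownOutcome_le := by
    rw [pairedOutcomes, map_ownOutcome_compProd_pairKernel]
    exact compProd_mono_left (map_fst_matchedPairs_le hη) κ
  measurePreserving :=
    measurePreserving_swapOutcomes (measurePreserving_swapCopies_matchedPairs hη.measurable)

lemma isPairing_exchangedPairs (hη : HasMean η m) (hc : Measurable c) :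
    IsPairing (ρ ⊗ₘ η ⊗ₘ κ) (exchangedPairs ρ η m κ c) :=
  (isPairing_pairedOutcomes hη).withDensity (measurable_exchangeProb hc).ennreal_ofReal
    (fun n => ENNReal.ofReal_le_one.2 (exchangeProb_le_one n))
    fun n => congrArg ENNReal.ofReal (exchangeProb_swapOutcomes n)

lemma integral_mul_outcome_sub_exchangedPairs (hη : HasMean η m)
    (hκ : HasMean κ Prod.snd) (hc : Measurable c)
    (hy : Integrable (fun p => p.2) (ρ ⊗ₘ η ⊗ₘ κ)) {f : S × ℝ → ℝ} (hf : Measurable f)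
    {C : ℝ} (hC : ∀ p, |f p| ≤ C) :
    ∫ n, f n.1.1 * (n.2.2 - n.2.1) ∂exchangedPairs ρ η m κ c = 0 := by
  have hpair := isPairing_exchangedPairs (ρ := ρ) (κ := κ) hη hc
  have hint : Integrable (fun n => f n.1.1 * (n.2.2 - n.2.1)) (exchangedPairs ρ η m κ c) :=
    ((hpair.integrable_swap hy).sub (hpair.integrable_own hy)).bdd_mul
      (hf.comp (by fun_prop)).aestronglyMeasurable (.of_forall fun n => hC n.1.1)
  rw [integrable_exchangedPairs_iff hc] at hint
  rw [integral_exchangedPairs hc, pairedOutcomes, Measure.integral_compProd hint]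
  refine integral_eq_zero_of_ae (.of_forall fun p => ?_)
  simp only [mul_left_comm _ (f _)]
  rw [integral_const_mul, integral_exchangeProb_mul_sub hκ hc, mul_zero, Pi.zero_apply]

lemma integrable_mul_sub_pairedOutcomes (hη : HasMean η m)
    (hx : Integrable (fun p => p.2) (ρ ⊗ₘ η)) {f : (S × ℝ) × ℝ → ℝ} (hf : Measurable f)
    {C : ℝ} (hC : ∀ p, |f p| ≤ C) :
    Integrable (fun n => f (ownOutcome n) * (n.1.1.2 - n.1.2)) (pairedOutcomes ρ η m κ) := by
  have hsub : Integrable (fun n => n.1.1.2 - n.1.2) (pairedOutcomes ρ η m κ) :=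
    integrable_comp_fst_compProd (pairKernel κ) (integrable_sub_matchedPairs hη hx)
  exact hsub.bdd_mul (hf.comp measurable_ownOutcome).aestronglyMeasurable (.of_forall fun n => hC _)

lemma integral_mul_sub_pairedOutcomes (hη : HasMean η m)
    (hx : Integrable (fun p => p.2) (ρ ⊗ₘ η)) {f : (S × ℝ) × ℝ → ℝ} (hf : Measurable f)
    {C : ℝ} (hC : ∀ p, |f p| ≤ C) :
    ∫ n, f (ownOutcome n) * (n.1.1.2 - n.1.2) ∂pairedOutcomes ρ η m κ =
      ∫ p, f p * (p.1.2 - m p.1.1) ∂(ρ ⊗ₘ η ⊗ₘ κ) := by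
  have hfint : Integrable (fun p => f p * (p.1.2 - m p.1.1)) (ρ ⊗ₘ η ⊗ₘ κ) :=
    (integrable_comp_fst_compProd κ (hη.integrable_sub_mean hx)).bdd_mul
      hf.aestronglyMeasurable (.of_forall hC)
  have hmean : Measurable fun p => ∫ y, f (p, y) ∂κ p :=
    hf.stronglyMeasurable.integral_kernel_prod_right'.measurable
  have hmean_le (p : S × ℝ) : |∫ y, f (p, y) ∂κ p| ≤ C := by
    simpa using norm_integral_le_of_norm_le_const (μ := κ p) (f := fun y => f (p, y))
      (.of_forall fun y => hC (p, y))
  calc ∫ n, f (ownOutcome n) * (n.1.1.2 - n.1.2) ∂pairedOutcomes ρ η m κ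
      = ∫ p, (∫ y, f (p.1, y) ∂κ p.1) * (p.1.2 - p.2) ∂matchedPairs ρ η m := by
        have hint := integrable_mul_sub_pairedOutcomes (κ := κ) hη hx hf hC
        rw [pairedOutcomes] at hint ⊢
        rw [Measure.integral_compProd hint]
        refine integral_congr_ae (.of_forall fun p => ?_)
        dsimp only
        rw [integral_mul_const, pairKernel_apply]
        congr 1
        have h := integral_fun_fst (μ := κ p.1) (ν := κ (p.1.1, p.2)) fun y => f (p.1, y)
        simpa [ownOutcome] using h
    _ = ∫ p, (∫ y, f (p, y) ∂κ p) * (p.2 - m p.1) ∂(ρ ⊗ₘ η) :=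
        integral_matchedPairs_mul_sub hη hx hmean hmean_le
    _ = ∫ p, f p * (p.1.2 - m p.1.1) ∂(ρ ⊗ₘ η ⊗ₘ κ) := by
        rw [Measure.integral_compProd hfint]
        simp only [integral_mul_const]

lemma integral_exceeds_mul_sub (hη : HasMean η m) (hc : Measurable c)
    (hx : Integrable (fun p => p.2) (ρ ⊗ₘ η)) :
    ∫ p, exceeds c p.1.1 p.2 * (p.1.2 - m p.1.1) ∂(ρ ⊗ₘ η ⊗ₘ κ) =
      2⁻¹ * ∫ n, pairContribution c n ∂pairedOutcomes ρ η m κ := by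
  have hA : Measurable fun p : (S × ℝ) × ℝ => exceeds c p.1.1 p.2 :=
    measurable_exceeds hc (by fun_prop) measurable_snd
  rw [← integral_mul_sub_pairedOutcomes hη hx hA fun p => abs_exceeds_le_one _ _,
    integral_eq_half_integral_add_comp (isPairing_pairedOutcomes hη).measurePreserving
      (integrable_mul_sub_pairedOutcomes hη hx hA fun p => abs_exceeds_le_one _ _)]
  congr 1
  refine integral_congr_ae (.of_forall fun n => ?_)
  simp only [pairContribution, ownOutcome, swapOutcomes_apply, swapCopies_apply, Prod.fst_swap]
  ring

lemma integrable_exceeds_mul_sub_exchangedPairs (hη : HasMean η m) (hc : Measurable c)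
    (hx : Integrable (fun p => p.2) (ρ ⊗ₘ η)) {i : ((S × ℝ) × ℝ) × (ℝ × ℝ) → ℝ}
    (hi : Measurable i) :
    Integrable (fun n => exceeds c n.1.1.1 (i n) * (n.1.1.2 - m n.1.1.1))
      (exchangedPairs ρ η m κ c) := by
  have hdev : Integrable (fun n => n.1.1.2 - m n.1.1.1) (exchangedPairs ρ η m κ c) :=
    (isPairing_exchangedPairs hη hc).integrable_own (f := fun p => p.1.2 - m p.1.1)
      (integrable_comp_fst_compProd κ (hη.integrable_sub_mean hx))
  have hexc : Measurable fun n => exceeds c n.1.1.1 (i n) := measurable_exceeds hc (by fun_prop) hi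
  exact hdev.bdd_mul hexc.aestronglyMeasurable (.of_forall fun n => abs_exceeds_le_one _ _)

lemma integral_exceeds_sub_mul_sub (hη : HasMean η m) (hc : Measurable c)
    (hx : Integrable (fun p => p.2) (ρ ⊗ₘ η)) :
    ∫ n, (exceeds c n.1.1.1 n.2.2 * (n.1.1.2 - m n.1.1.1) -
        exceeds c n.1.1.1 n.2.1 * (n.1.1.2 - m n.1.1.1)) ∂exchangedPairs ρ η m κ c =
      -(2⁻¹ * ∫ n, exchangeProb κ c n * pairContribution c n ∂pairedOutcomes ρ η m κ) := by
  have hpair := isPairing_exchangedPairs (ρ := ρ) (κ := κ) hη hc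
  have hint : Integrable (fun n => exceeds c n.1.1.1 n.2.2 * (n.1.1.2 - m n.1.1.1) -
      exceeds c n.1.1.1 n.2.1 * (n.1.1.2 - m n.1.1.1)) (exchangedPairs ρ η m κ c) :=
    (integrable_exceeds_mul_sub_exchangedPairs hη hc hx (by fun_prop)).sub
      (integrable_exceeds_mul_sub_exchangedPairs hη hc hx (by fun_prop))
  rw [integral_eq_half_integral_add_comp hpair.measurePreserving hint,
    ← integral_exchangedPairs hc, ← mul_neg, ← integral_neg]
  congr 1
  refine integral_congr_ae (.of_forall fun n => ?_)
  simp only [pairContribution, swapOutcomes_apply, swapCopies_apply, Prod.fst_swap, Prod.snd_swap]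
  ring

lemma integrable_pairContribution (hη : HasMean η m) (hc : Measurable c)
    (hx : Integrable (fun p => p.2) (ρ ⊗ₘ η)) :
    Integrable (pairContribution c) (pairedOutcomes ρ η m κ) := by
  have hown : Measurable fun n : ((S × ℝ) × ℝ) × (ℝ × ℝ) => exceeds c n.1.1.1 n.2.1 :=
    measurable_exceeds hc (by fun_prop) (by fun_prop)
  have hother : Measurable fun n : ((S × ℝ) × ℝ) × (ℝ × ℝ) => exceeds c n.1.1.1 n.2.2 :=
    measurable_exceeds hc (by fun_prop) (by fun_prop)
  have hsub : Integrable (fun n => n.1.1.2 - n.1.2) (pairedOutcomes ρ η m κ) :=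
    integrable_comp_fst_compProd (pairKernel κ) (integrable_sub_matchedPairs hη hx)
  exact hsub.bdd_mul (hown.sub hother).aestronglyMeasurable (.of_forall fun n =>
    (abs_sub _ _).trans (add_le_add (abs_exceeds_le_one _ _) (abs_exceeds_le_one _ _)))

lemma integral_exceeds_mul_sub_exchangeOutcomes_nonneg [IsFiniteMeasure ρ] (hη : HasMean η m)
    (hc : Measurable c) (hx : Integrable (fun p => p.2) (ρ ⊗ₘ η)) :
    0 ≤ ∫ p, exceeds c p.1.1 p.2 * (p.1.2 - m p.1.1)
      ∂exchangeOutcomes (ρ ⊗ₘ η ⊗ₘ κ) (exchangedPairs ρ η m κ c) := by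
  have hpair := isPairing_exchangedPairs (ρ := ρ) (κ := κ) hη hc
  have := hpair.isFiniteMeasure
  have hcontribution := integrable_pairContribution (κ := κ) hη hc hx
  have hm := hη.measurable
  have hmeas : Measurable fun p : (S × ℝ) × ℝ => exceeds c p.1.1 p.2 :=
    measurable_exceeds hc (by fun_prop) measurable_snd
  have hΓ : Integrable (fun p => exceeds c p.1.1 p.2 * (p.1.2 - m p.1.1)) (ρ ⊗ₘ η ⊗ₘ κ) :=
    (integrable_comp_fst_compProd κ (hη.integrable_sub_mean hx)).bdd_mul
      hmeas.aestronglyMeasurable (.of_forall fun p => abs_exceeds_le_one _ _)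
  calc (0 : ℝ) ≤ 2⁻¹ * (∫ n, pairContribution c n ∂pairedOutcomes ρ η m κ -
        ∫ n, exchangeProb κ c n * pairContribution c n ∂pairedOutcomes ρ η m κ) := by
        refine mul_nonneg (by norm_num) (sub_nonneg.2 (integral_mono ?_ hcontribution
          exchangeProb_mul_pairContribution_le))
        refine hcontribution.bdd_mul (c := 1) (measurable_exchangeProb hc).aestronglyMeasurable
          (.of_forall fun n => ?_)
        rw [Real.norm_of_nonneg (exchangeProb_nonneg n)]
        exact exchangeProb_le_one n
    _ = _ := by
        have hother := integrable_exceeds_mul_sub_exchangedPairs (κ := κ) hη hc hx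
          (i := fun n => n.2.2) (by fun_prop)
        have hintegrand : Measurable fun p : (S × ℝ) × ℝ =>
            exceeds c p.1.1 p.2 * (p.1.2 - m p.1.1) := by fun_prop
        rw [hpair.integral_exchangeOutcomes hintegrand hΓ hother,
          integral_exceeds_mul_sub hη hc hx]
        simp only [ownOutcome, otherOutcome]
        rw [integral_exceeds_sub_mul_sub hη hc hx]
        ring

lemma integral_mul_outcome_sub_exchangeOutcomes [IsFiniteMeasure ρ] (hη : HasMean η m)
    (hκ : HasMean κ Prod.snd) (hc : Measurable c)
    (hy : Integrable (fun p => p.2) (ρ ⊗ₘ η ⊗ₘ κ)) {f : S × ℝ → ℝ} (hf : Measurable f)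
    {C : ℝ} (hC : ∀ p, |f p| ≤ C) :
    ∫ p, f p.1 * (p.2 - p.1.2)
      ∂exchangeOutcomes (ρ ⊗ₘ η ⊗ₘ κ) (exchangedPairs ρ η m κ c) = 0 := by
  have hpair := isPairing_exchangedPairs (ρ := ρ) (κ := κ) hη hc
  have := hpair.isFiniteMeasure
  have hx : Integrable (fun p : (S × ℝ) × ℝ => p.1.2) (ρ ⊗ₘ η ⊗ₘ κ) :=
    integrable_comp_fst_compProd κ (hκ.integrable_mean hy)
  have hΓ : Integrable (fun p => f p.1 * (p.2 - p.1.2)) (ρ ⊗ₘ η ⊗ₘ κ) :=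
    (hκ.integrable_sub_mean hy).bdd_mul (hf.comp measurable_fst).aestronglyMeasurable
      (.of_forall fun p => hC p.1)
  have hother : Integrable (fun n => f n.1.1 * (n.2.2 - n.1.1.2)) (exchangedPairs ρ η m κ c) :=
    ((hpair.integrable_swap hy).sub (hpair.integrable_own hx)).bdd_mul
      (hf.comp (by fun_prop)).aestronglyMeasurable (.of_forall fun n => hC n.1.1)
  rw [hpair.integral_exchangeOutcomes (by fun_prop) hΓ hother, hκ.integral_mul_sub_mean hy hf hC,
    zero_add, ← integral_mul_outcome_sub_exchangedPairs hη hκ hc hy hf hC]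
  refine integral_congr_ae (.of_forall fun n => ?_)
  simp only [ownOutcome, otherOutcome]
  ring

theorem exists_identDistrib_integral_exceeds_mul_sub_nonneg [IsFiniteMeasure ρ]
    (hη : HasMean η m) (hκ : HasMean κ Prod.snd) (hc : Measurable c)
    (hy : Integrable (fun p => p.2) (ρ ⊗ₘ η ⊗ₘ κ)) :
    ∃ Γ : Measure ((S × ℝ) × ℝ),
      IdentDistrib Prod.fst Prod.fst Γ (ρ ⊗ₘ η ⊗ₘ κ) ∧
      IdentDistrib (fun p => (p.1.1, p.2)) (fun p => (p.1.1, p.2)) Γ (ρ ⊗ₘ η ⊗ₘ κ) ∧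
      (∀ f : S × ℝ → ℝ, Measurable f → (∃ C, ∀ p, |f p| ≤ C) →
        ∫ p, f p.1 * (p.2 - p.1.2) ∂Γ = 0) ∧
      0 ≤ ∫ p, exceeds c p.1.1 p.2 * (p.1.2 - m p.1.1) ∂Γ := by
  have hpair := isPairing_exchangedPairs (ρ := ρ) (κ := κ) hη hc
  have := hpair.isFiniteMeasure
  have houtcome : Measurable fun p : (S × ℝ) × ℝ => (p.1.1, p.2) := by fun_prop
  refine ⟨exchangeOutcomes (ρ ⊗ₘ η ⊗ₘ κ) (exchangedPairs ρ η m κ c),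
    ⟨measurable_fst.aemeasurable, measurable_fst.aemeasurable, hpair.map_fst_exchangeOutcomes⟩,
    ⟨houtcome.aemeasurable, houtcome.aemeasurable, hpair.map_outcome_exchangeOutcomes⟩, ?_,
    integral_exceeds_mul_sub_exchangeOutcomes_nonneg hη hc (hκ.integrable_mean hy)⟩
  rintro f hf ⟨C, hC⟩
  exact integral_mul_outcome_sub_exchangeOutcomes hη hκ hc hy hf hC

end MartingaleExchange

section Payoff

-- `exceeds (K - ·) z y` is a subgradient of the convex function `(· + y - K)₊` at `z`.
lemma max_add_exceeds_mul_sub_le (K z x y : ℝ) :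
    max (z + y - K) 0 + exceeds (fun z => K - z) z y * (x - z) ≤ max (x + y - K) 0 := by
  unfold exceeds
  split_ifs with h
  · rw [max_eq_left (by linarith), one_mul]
    exact le_trans (by linarith) (le_max_left _ _)
  · rw [max_eq_right (by linarith), zero_mul, add_zero]
    exact le_max_right _ _

lemma integral_payoff_le_of_exceeds {Γ : Measure ((ℝ × ℝ) × ℝ)} [IsFiniteMeasure Γ] {K : ℝ}
    (hz : Integrable (fun p => p.1.1) Γ) (hx : Integrable (fun p => p.1.2) Γ)
    (hy : Integrable (fun p => p.2) Γ)
    (hgain : 0 ≤ ∫ p, exceeds (fun z => K - z) p.1.1 p.2 * (p.1.2 - p.1.1) ∂Γ) :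
    ∫ p, max (p.1.1 + p.2 - K) 0 ∂Γ ≤ ∫ p, max (p.1.2 + p.2 - K) 0 ∂Γ := by
  have hpayoff {w : (ℝ × ℝ) × ℝ → ℝ} (hw : Integrable w Γ) :
      Integrable (fun p => max (w p + p.2 - K) 0) Γ :=
    ((hw.add hy).sub (integrable_const K)).pos_part
  have hexc : Measurable fun p : (ℝ × ℝ) × ℝ => exceeds (fun z => K - z) p.1.1 p.2 :=
    measurable_exceeds (by fun_prop) (by fun_prop) measurable_snd
  have hint : Integrable (fun p => exceeds (fun z => K - z) p.1.1 p.2 * (p.1.2 - p.1.1)) Γ :=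
    (hx.sub hz).bdd_mul hexc.aestronglyMeasurable (.of_forall fun p => abs_exceeds_le_one _ _)
  calc ∫ p, max (p.1.1 + p.2 - K) 0 ∂Γ
      ≤ ∫ p, max (p.1.1 + p.2 - K) 0 ∂Γ +
          ∫ p, exceeds (fun z => K - z) p.1.1 p.2 * (p.1.2 - p.1.1) ∂Γ :=
        le_add_of_nonneg_right hgain
    _ = ∫ p, (max (p.1.1 + p.2 - K) 0 +
          exceeds (fun z => K - z) p.1.1 p.2 * (p.1.2 - p.1.1)) ∂Γ :=
        (integral_add (hpayoff hz) hint).symm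
    _ ≤ ∫ p, max (p.1.2 + p.2 - K) 0 ∂Γ :=
        integral_mono ((hpayoff hz).add hint) (hpayoff hx)
          fun p => max_add_exceeds_mul_sub_le K p.1.1 p.1.2 p.2

lemma isMartingaleCoupling_map {Γ : Measure ((ℝ × ℝ) × ℝ)} [IsProbabilityMeasure Γ]
    (hΓ : ∀ f : ℝ × ℝ → ℝ, Measurable f → (∃ C, ∀ p, |f p| ≤ C) →
      ∫ p, f p.1 * (p.2 - p.1.2) ∂Γ = 0) :
    IsMartingaleCoupling (Γ.map fun p => p.1.2) (Γ.map fun p => p.2)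
      (Γ.map fun p => (p.1.2, p.2)) := by
  have hxy : Measurable fun p : (ℝ × ℝ) × ℝ => (p.1.2, p.2) := by fun_prop
  refine ⟨Measure.isProbabilityMeasure_map hxy.aemeasurable, Measure.map_map measurable_fst hxy,
    Measure.map_map measurable_snd hxy, ?_⟩
  rintro h hh ⟨C, hC⟩
  rw [integral_map hxy.aemeasurable (Measurable.aestronglyMeasurable (by fun_prop))]
  exact hΓ (fun p => h p.2) (by fun_prop) ⟨C, fun p => hC p.2⟩

variable {ρ : Measure ℝ} [IsProbabilityMeasure ρ] {η : Kernel ℝ ℝ} [IsMarkovKernel η]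
  {κ : Kernel (ℝ × ℝ) ℝ} [IsMarkovKernel κ]

theorem exists_isMartingaleCoupling_integral_le_of_hasMean (hη : HasMean η fun z => z)
    (hκ : HasMean κ Prod.snd) (hy : Integrable (fun p => p.2) (ρ ⊗ₘ η ⊗ₘ κ)) (K : ℝ) :
    ∃ π, IsMartingaleCoupling ((ρ ⊗ₘ η ⊗ₘ κ).map fun p => p.1.2)
        ((ρ ⊗ₘ η ⊗ₘ κ).map fun p => p.2) π ∧
      ∫ p, max (p.1.1 + p.2 - K) 0 ∂(ρ ⊗ₘ η ⊗ₘ κ) ≤ ∫ p, max (p.1 + p.2 - K) 0 ∂π := by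
  obtain ⟨Γ, hzx, hzy, hmart, hgain⟩ :=
    exists_identDistrib_integral_exceeds_mul_sub_nonneg (c := fun z => K - z) hη hκ
      (by fun_prop) hy
  have hz' : IdentDistrib (fun p => p.1.1) (fun p => p.1.1) Γ (ρ ⊗ₘ η ⊗ₘ κ) :=
    hzx.comp measurable_fst
  have hx' : IdentDistrib (fun p => p.1.2) (fun p => p.1.2) Γ (ρ ⊗ₘ η ⊗ₘ κ) :=
    hzx.comp measurable_snd
  have hy' : IdentDistrib (fun p => p.2) (fun p => p.2) Γ (ρ ⊗ₘ η ⊗ₘ κ) :=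
    hzy.comp measurable_snd
  have hx : Integrable (fun p => p.2) (ρ ⊗ₘ η) := hκ.integrable_mean hy
  have hxΓ := hx'.integrable_iff.2 (integrable_comp_fst_compProd κ hx)
  have hzΓ := hz'.integrable_iff.2 (integrable_comp_fst_compProd κ
    (integrable_comp_fst_compProd η (hη.integrable_mean hx)))
  have : IsProbabilityMeasure Γ := by
    have : IsProbabilityMeasure (Γ.map Prod.fst) :=
      hzx.map_eq ▸ Measure.isProbabilityMeasure_map measurable_fst.aemeasurable
    exact Measure.isProbabilityMeasure_of_map Prod.fst
  have hpayoff : Measurable fun q : ℝ × ℝ => max (q.1 + q.2 - K) 0 := by fun_prop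
  have hxy : Measurable fun p : (ℝ × ℝ) × ℝ => (p.1.2, p.2) := by fun_prop
  refine ⟨Γ.map fun p => (p.1.2, p.2), ?_, ?_⟩
  · rw [← hx'.map_eq, ← hy'.map_eq]
    exact isMartingaleCoupling_map hmart
  calc ∫ p, max (p.1.1 + p.2 - K) 0 ∂(ρ ⊗ₘ η ⊗ₘ κ) = ∫ p, max (p.1.1 + p.2 - K) 0 ∂Γ :=
        (hzy.comp hpayoff).integral_eq.symm
    _ ≤ ∫ p, max (p.1.2 + p.2 - K) 0 ∂Γ :=
        integral_payoff_le_of_exceeds hzΓ hxΓ (hy'.integrable_iff.2 hy) hgain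
    _ = ∫ p, max (p.1 + p.2 - K) 0 ∂Γ.map fun p => (p.1.2, p.2) :=
        (integral_map hxy.aemeasurable hpayoff.aestronglyMeasurable).symm

end Payoff

section RandomVariables

variable {Ω β : Type*} [mΩ : MeasurableSpace Ω] [mβ : MeasurableSpace β] {Q : Measure Ω}
  [IsFiniteMeasure Q]

lemma condExp_ae_eq_of_condExp_ae_eq {m₁ m₂ : MeasurableSpace Ω} (h₁₂ : m₁ ≤ m₂) (h₂ : m₂ ≤ mΩ)
    {U V : Ω → ℝ} (hV : Measurable[m₁] V) (h : Q[U | m₂] =ᵐ[Q] V) : Q[U | m₁] =ᵐ[Q] V := by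
  have hVint : Integrable V Q := integrable_condExp.congr h
  calc Q[U | m₁] =ᵐ[Q] Q[Q[U | m₂] | m₁] := (condExp_condExp_of_le h₁₂ h₂).symm
    _ =ᵐ[Q] Q[V | m₁] := condExp_congr_ae h
    _ = V := condExp_of_stronglyMeasurable (h₁₂.trans h₂) hV.stronglyMeasurable hVint

lemma ae_map_integral_condDistrib_eq {X : Ω → β} {Y : Ω → ℝ} {g : β → ℝ} (hX : Measurable X)
    (hY : Integrable Y Q) (hg : Measurable g)
    (hXY : Q[Y | mβ.comap X] =ᵐ[Q] fun ω => g (X ω)) :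
    ∀ᵐ b ∂Q.map X, ∫ y, y ∂condDistrib Y X Q b = g b := by
  have hmean : Measurable fun b => ∫ y, y ∂condDistrib Y X Q b :=
    (measurable_snd.stronglyMeasurable (α := β × ℝ)).integral_condDistrib.measurable
  refine (ae_map_iff hX.aemeasurable (measurableSet_eq_fun hmean hg)).2 ?_
  filter_upwards [condExp_ae_eq_integral_condDistrib' hX hY, hXY] with ω h hω
  rw [← h, hω]

-- The conditional law need only have mean `g` almost surely; on the exceptional null set it is
-- replaced by the Dirac mass at `g`.
lemma exists_hasMean_compProd_eq_map {X : Ω → β} {Y : Ω → ℝ} {g : β → ℝ} (hX : Measurable X)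
    (hY : Integrable Y Q) (hg : Measurable g)
    (hXY : Q[Y | mβ.comap X] =ᵐ[Q] fun ω => g (X ω)) :
    ∃ κ : Kernel β ℝ, IsMarkovKernel κ ∧ HasMean κ g ∧
      Q.map X ⊗ₘ κ = Q.map fun ω => (X ω, Y ω) := by
  classical
  have hint : ∀ᵐ b ∂Q.map X, Integrable (fun y => y) (condDistrib Y X Q b) := by
    refine Integrable.condDistrib_ae_map (f := Prod.snd) hY.aemeasurable ?_
    exact (integrable_map_measure measurable_snd.aestronglyMeasurable
      (hX.aemeasurable.prodMk hY.aemeasurable)).2 hY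
  obtain ⟨s, hs, hsm, hs0⟩ := exists_measurable_superset_of_null
    (ae_iff.1 (hint.and (ae_map_integral_condDistrib_eq hX hY hg hXY)))
  refine ⟨Kernel.piecewise hsm (Kernel.deterministic g hg) (condDistrib Y X Q), inferInstance,
    ⟨fun b => ?_, fun b => ?_⟩, ?_⟩
  · rw [Kernel.piecewise_apply]
    split_ifs with hb
    · exact integrable_dirac enorm_lt_top
    · exact (not_not.1 fun h => hb (hs h)).1
  · rw [Kernel.piecewise_apply]
    split_ifs with hb
    · rw [Kernel.deterministic_apply, integral_dirac]
    · exact (not_not.1 fun h => hb (hs h)).2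
  · rw [← compProd_map_condDistrib hY.aemeasurable]
    refine Measure.compProd_congr ?_
    filter_upwards [measure_eq_zero_iff_ae_notMem.1 hs0] with b hb
    rw [Kernel.piecewise_apply, if_neg hb]

end RandomVariables

lemma exists_isMartingaleCoupling_integral_le_of_condExp {Ω : Type*} [MeasurableSpace Ω]
    {Q : Measure Ω} [IsProbabilityMeasure Q] {Z X Y : Ω → ℝ} (hZ : Measurable Z)
    (hX : Measurable X) (hY : Integrable Y Q)
    (hZX : Q[X | MeasurableSpace.comap Z inferInstance] =ᵐ[Q] Z)
    (hXY : Q[Y | MeasurableSpace.comap (fun ω => (Z ω, X ω)) inferInstance] =ᵐ[Q] X) (K : ℝ) :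
    ∃ π, IsMartingaleCoupling (Q.map X) (Q.map Y) π ∧
      ∫ ω, max (Z ω + Y ω - K) 0 ∂Q ≤ ∫ p, max (p.1 + p.2 - K) 0 ∂π := by
  have hZX' : Measurable fun ω => (Z ω, X ω) := hZ.prodMk hX
  obtain ⟨η, _, hη, hlaw⟩ := exists_hasMean_compProd_eq_map (g := fun z => z) hZ
    (integrable_condExp.congr hXY) measurable_id hZX
  obtain ⟨κ, _, hκ, hlaw'⟩ := exists_hasMean_compProd_eq_map (g := Prod.snd) hZX' hY
    measurable_snd hXY
  have htriple : AEMeasurable (fun ω => ((Z ω, X ω), Y ω)) Q :=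
    hZX'.aemeasurable.prodMk hY.aemeasurable
  have : IsProbabilityMeasure (Q.map Z) := Measure.isProbabilityMeasure_map hZ.aemeasurable
  rw [← hlaw] at hlaw'
  obtain ⟨π, hπ, hle⟩ := exists_isMartingaleCoupling_integral_le_of_hasMean hη hκ
    (hlaw' ▸ (integrable_map_measure measurable_snd.aestronglyMeasurable htriple).2 hY) K
  rw [hlaw', AEMeasurable.map_map_of_aemeasurable (by fun_prop) htriple,
    AEMeasurable.map_map_of_aemeasurable (by fun_prop) htriple] at hπ
  rw [hlaw', integral_map htriple (Measurable.aestronglyMeasurable (by fun_prop))] at hle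
  exact ⟨π, hπ, hle⟩

theorem asian_two_marginal_domination_general {Ω : Type*} {m₁ m₂ mΩ : MeasurableSpace Ω}
    {Q : Measure Ω} [IsProbabilityMeasure Q] (h₁₂ : m₁ ≤ m₂) (h₂ : m₂ ≤ mΩ)
    {Z X Y : Ω → ℝ} (hZ : Measurable[m₁] Z) (hX : Measurable[m₂] X)
    (hY : Integrable Y Q) (hZX : Q[X | m₁] =ᵐ[Q] Z) (hXY : Q[Y | m₂] =ᵐ[Q] X) (K : ℝ) :
    ∃ π, IsMartingaleCoupling (Q.map X) (Q.map Y) π ∧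
      ∫ ω, max (Z ω + Y ω - K) 0 ∂Q ≤ ∫ p, max (p.1 + p.2 - K) 0 ∂π := by
  have hZX' : Measurable[m₂] fun ω => (Z ω, X ω) := (hZ.mono h₁₂ le_rfl).prodMk hX
  refine exists_isMartingaleCoupling_integral_le_of_condExp (hZ.mono (h₁₂.trans h₂) le_rfl)
    (hX.mono h₂ le_rfl) hY ?_ ?_ K
  · exact condExp_ae_eq_of_condExp_ae_eq hZ.comap_le (h₁₂.trans h₂) (comap_measurable _) hZX
  · exact condExp_ae_eq_of_condExp_ae_eq hZX'.comap_le h₂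
      (measurable_snd.comp (comap_measurable _)) hXY

/-- Theorem: if `π` maximises `∫ (x + y - K)₊` over all martingale couplings of
`Law(X₁)` and `Law(X₂)`, then for every `0 ≤ t ≤ 1` the value
`E[(X_t + X₂ - K)₊]` is dominated by `∫ (x + y - K)₊ dπ`. -/
theorem asian_two_marginal_domination
    {Ω : Type*} [MeasurableSpace Ω] (Q : Measure Ω) [IsProbabilityMeasure Q]
    (F : ℝ → MeasurableSpace Ω)
    (hFle : ∀ t : ℝ, F t ≤ (inferInstance : MeasurableSpace Ω))
    (hFmono : Monotone F)
    (X : ℝ → Ω → ℝ)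
    (hadapt : ∀ t ∈ Set.Icc (0 : ℝ) 2, Measurable[F t] (X t))
    (hint : ∀ t ∈ Set.Icc (0 : ℝ) 2, Integrable (X t) Q)
    (hmart : ∀ s t : ℝ, 0 ≤ s → s ≤ t → t ≤ 2 → Q[X t|F s] =ᵐ[Q] X s)
    (K : ℝ)
    (π : Measure (ℝ × ℝ))
    (hπ : IsMartingaleCoupling (Q.map (X 1)) (Q.map (X 2)) π)
    (hmax : ∀ π' : Measure (ℝ × ℝ),
      IsMartingaleCoupling (Q.map (X 1)) (Q.map (X 2)) π' →
      ∫ p : ℝ × ℝ, max (p.1 + p.2 - K) 0 ∂π' ≤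
        ∫ p : ℝ × ℝ, max (p.1 + p.2 - K) 0 ∂π) :
    ∀ t : ℝ, 0 ≤ t → t ≤ 1 →
      ∫ ω, max (X t ω + X 2 ω - K) 0 ∂Q ≤
        ∫ p : ℝ × ℝ, max (p.1 + p.2 - K) 0 ∂π := by
  intro t ht₀ ht₁
  obtain ⟨π', hπ', hle⟩ := asian_two_marginal_domination_general (hFmono ht₁) (hFle 1)
    (hadapt t ⟨ht₀, by linarith⟩) (hadapt 1 (by norm_num)) (hint 2 (by norm_num))
    (hmart t 1 ht₀ ht₁ one_le_two) (hmart 1 2 zero_le_one one_le_two le_rfl) K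
  exact hle.trans (hmax π' hπ')
end
end
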